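/- arXiv:2110.15908 — 2 statements merged into one kernel-verified Lean document; each statement's English description precedes it below -/
import Mathlib

section
/- Let X be a smooth extremal surface of degree d = q+1 in ℙ³(k). Then any three pairwise skew lines on X are contained in exactly one quadric configuration on X: for pairwise skew lines L₁, L₂, L₃ on X there exists a unique quadric configuration on X containing L₁, L₂ and L₃ among its 2d lines. -/
open Module

/-! Basic setup: `k` is an algebraically closed field of characteristic `p > 0`,
`q = p^e`.  We model ℙ³(k) via linear subspaces of `k⁴ = Fin 4 → k`:
points, lines and planes of ℙ³(k) are subspaces of dimension 1, 2 and 3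
respectively.  A hypersurface cut out by a homogeneous form is recorded by its
affine cone in `k⁴`. -/

/-- The Frobenius form in 4 variables determined by a 4×4 matrix `A`:
`∑ i j, A i j * x i ^ q * x j`, a homogeneous form of degree `q+1`. -/
def frobForm {k : Type*} [Field k] (q : ℕ) (A : Matrix (Fin 4) (Fin 4) k)
    (x : Fin 4 → k) : k :=
  ∑ i, ∑ j, A i j * x i ^ q * x j

/-- The affine cone in `k⁴` of the extremal surface in ℙ³(k) cut out by the
Frobenius form with matrix `A`; a point of ℙ³(k) lies on the surface iff its
homogeneous coordinate representatives lie in this set. -/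
def extremalCone (k : Type*) [Field k] (q : ℕ) (A : Matrix (Fin 4) (Fin 4) k) :
    Set (Fin 4 → k) :=
  {x | frobForm q A x = 0}

/-- A point of ℙ³(k): a 1-dimensional subspace of `k⁴`. -/
def IsPoint {k : Type*} [Field k] (c : Submodule k (Fin 4 → k)) : Prop :=
  finrank k c = 1

/-- A line of ℙ³(k): a 2-dimensional subspace of `k⁴`. -/
def IsLine {k : Type*} [Field k] (L : Submodule k (Fin 4 → k)) : Prop :=
  finrank k L = 2

/-- A plane of ℙ³(k): a 3-dimensional subspace of `k⁴`. -/
def IsPlane {k : Type*} [Field k] (H : Submodule k (Fin 4 → k)) : Prop :=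
  finrank k H = 3

/-- `L` is a line lying on the surface with affine cone `X`. -/
def IsLineOn {k : Type*} [Field k] (X : Set (Fin 4 → k))
    (L : Submodule k (Fin 4 → k)) : Prop :=
  IsLine L ∧ (L : Set (Fin 4 → k)) ⊆ X

/-- Two lines of ℙ³(k) meet iff the corresponding subspaces of `k⁴` intersect
nontrivially. -/
def MeetsLine {k : Type*} [Field k] (L M : Submodule k (Fin 4 → k)) : Prop :=
  L ⊓ M ≠ ⊥

/-- Two lines of ℙ³(k) are skew iff the corresponding subspaces of `k⁴`
intersect trivially. -/
def SkewLine {k : Type*} [Field k] (L M : Submodule k (Fin 4 → k)) : Prop :=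
  L ⊓ M = ⊥

/-- `IsStarAt q X S c`: `S` is a star on the surface with affine cone `X`,
centered at the point `c`, i.e. a set of `q+1` distinct lines on the surface
all passing through `c`. -/
def IsStarAt {k : Type*} [Field k] (q : ℕ) (X : Set (Fin 4 → k))
    (S : Set (Submodule k (Fin 4 → k))) (c : Submodule k (Fin 4 → k)) : Prop :=
  IsPoint c ∧ S.ncard = q + 1 ∧ ∀ L ∈ S, IsLineOn X L ∧ c ≤ L

/-- `S` is a star on the surface with affine cone `X`. -/
def IsStar {k : Type*} [Field k] (q : ℕ) (X : Set (Fin 4 → k))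
    (S : Set (Submodule k (Fin 4 → k))) : Prop :=
  ∃ c, IsStarAt q X S c

/-- `c` is a star point of the surface with affine cone `X`. -/
def IsStarPoint {k : Type*} [Field k] (q : ℕ) (X : Set (Fin 4 → k))
    (c : Submodule k (Fin 4 → k)) : Prop :=
  ∃ S, IsStarAt q X S c

/-- `H` is a star plane of the surface with affine cone `X`, centered at `c`:
the plane section `X ∩ H` is the union of a star centered at `c`. -/
def IsStarPlaneAt {k : Type*} [Field k] (q : ℕ) (X : Set (Fin 4 → k))
    (H c : Submodule k (Fin 4 → k)) : Prop :=
  IsPlane H ∧ ∃ S, IsStarAt q X S c ∧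
    X ∩ (H : Set (Fin 4 → k)) = ⋃ L ∈ S, (L : Set (Fin 4 → k))

/-- An element of `Aut(X)`: since every projective linear automorphism of
ℙ³(k) is represented by an invertible linear map of `k⁴` (uniquely up to
scalars, which act trivially on subspaces and preserve every cone), `g ∈
PGL(4,k)` with `g(X) = X` corresponds to a linear automorphism of `k⁴`
mapping the affine cone `X` onto itself. -/
def PreservesCone {k : Type*} [Field k] (X : Set (Fin 4 → k))
    (g : (Fin 4 → k) ≃ₗ[k] (Fin 4 → k)) : Prop :=
  (⇑g) '' X = X

/-- A quadric configuration on the surface with affine cone `X` (of degree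
`d`): a set of `2d` lines on the surface that is the union of two sets of `d`
pairwise skew lines such that every line of either set meets every line of
the other set. -/
def IsQuadricConfig {k : Type*} [Field k] (d : ℕ) (X : Set (Fin 4 → k))
    (S : Set (Submodule k (Fin 4 → k))) : Prop :=
  S.ncard = 2 * d ∧ (∀ L ∈ S, IsLineOn X L) ∧
  ∃ ℒ ℳ : Set (Submodule k (Fin 4 → k)),
    S = ℒ ∪ ℳ ∧ ℒ.ncard = d ∧ ℳ.ncard = d ∧
    (∀ L ∈ ℒ, ∀ M ∈ ℒ, L ≠ M → SkewLine L M) ∧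
    (∀ L ∈ ℳ, ∀ M ∈ ℳ, L ≠ M → SkewLine L M) ∧
    (∀ L ∈ ℒ, ∀ M ∈ ℳ, MeetsLine L M)

/-! Three pairwise skew lines determine an isomorphism `k⁴ ≃ U ⊗ W` with `dim U = dim W = 2`, hence
a quadric `ℙ(U) × ℙ(W)` having them in one ruling. If they lie on `X`, the Frobenius form restricts
to the quadric as a product `R(a) P(w)` of Frobenius forms on the two factors, so the lines of the
two rulings that lie on `X` are given by the zeros of `R` and of `P`. Nonsingularity makes both
forms separable on `ℙ¹`, with exactly `q + 1` zeros each. Conversely, a line meeting three lines of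
one ruling belongs to the other ruling, so by counting the two halves of a quadric configuration
through the three lines are these two sets of `q + 1` lines. -/

open scoped TensorProduct LinearAlgebra.Projectivization
open Projectivization (mk)

section Sesquilinear

variable {k V : Type*} [Field k] [AddCommGroup V] [Module k V] {σ : k →+* k}
  {B : V →ₛₗ[σ] V →ₗ[k] k} {x y : V}

/-- A subspace on which the form `x ↦ B x x` vanishes identically, i.e. a linear subspace contained
in the cone `B x x = 0`. -/
def IsIsotropicSubspace (B : V →ₛₗ[σ] V →ₗ[k] k) (L : Submodule k V) : Prop :=
  ∀ x ∈ L, B x x = 0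

/-- The points of the projective hypersurface `B x x = 0`. -/
def isotropicPoints (B : V →ₛₗ[σ] V →ₗ[k] k) : Set (ℙ k V) :=
  {p | IsIsotropicSubspace B p.submodule}

lemma isIsotropicSubspace_span_singleton : IsIsotropicSubspace B (k ∙ x) ↔ B x x = 0 := by
  refine ⟨fun h => h x (Submodule.mem_span_singleton_self x), fun h y hy => ?_⟩
  obtain ⟨c, rfl⟩ := Submodule.mem_span_singleton.mp hy
  simp [h]

lemma mk_mem_isotropicPoints (hx : x ≠ 0) : mk k x hx ∈ isotropicPoints B ↔ B x x = 0 := by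
  rw [isotropicPoints, Set.mem_ofPred_eq, Projectivization.submodule_mk,
    isIsotropicSubspace_span_singleton]

-- For `t` with `σ t ≠ t`, the expansions at `x + y` and `x + t • y` are independent equations.
lemma IsIsotropicSubspace.apply_eq_zero (hσ : σ ≠ RingHom.id k) {L : Submodule k V}
    (hL : IsIsotropicSubspace B L) (hx : x ∈ L) (hy : y ∈ L) : B x y = 0 := by
  obtain ⟨t, ht⟩ : ∃ t, σ t ≠ t := by
    by_contra! h
    exact hσ (RingHom.ext h)
  have expand (s : k) : s * B x y + σ s * B y x = 0 := by
    simpa [hL x hx, hL y hy] using hL (x + s • y) (L.add_mem hx (L.smul_mem s hy))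
  have : (σ t - t) * B x y = 0 := by
    linear_combination σ t * (by simpa using expand 1 : B x y + B y x = 0) - expand t
  exact (mul_eq_zero.mp this).resolve_left (sub_ne_zero.mpr ht)

lemma exists_apply_self_ne_zero [Nontrivial V] (hσ : σ ≠ RingHom.id k) (hB : B.SeparatingRight) :
    ∃ x, B x x ≠ 0 := by
  by_contra! h
  obtain ⟨y, hy⟩ := exists_ne (0 : V)
  have hV : IsIsotropicSubspace B ⊤ := fun x _ => h x
  exact hy (hB y fun x => hV.apply_eq_zero hσ trivial trivial)

end Sesquilinear

section ProjectiveLine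

open Polynomial

variable {k V : Type*} [Field k] [AddCommGroup V] [Module k V] {σ : k →+* k}
  {B : V →ₛₗ[σ] V →ₗ[k] k} {x y : V} {q : ℕ}

lemma exists_smul_add_smul_eq (hV : finrank k V = 2) (h : LinearIndependent k ![x, y]) (z : V) :
    ∃ s t : k, s • x + t • y = z := by
  rw [← Submodule.mem_span_pair, ← Matrix.range_cons_cons_empty x y ![],
    h.span_eq_top_of_card_eq_finrank (by simp [hV])]
  trivial

lemma smul_add_ne_zero_of_linearIndependent (h : LinearIndependent k ![x, y]) (t : k) :
    t • x + y ≠ 0 := fun h0 => by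
  simpa using (LinearIndependent.pair_iff.mp h t 1 (by simpa using h0)).2

/-- The point of the projective line through `x` and `y` with affine coordinate `t`, in the chart
with `y` as the origin and `x` as the point at infinity. -/
def affinePoint (h : LinearIndependent k ![x, y]) (t : k) : ℙ k V :=
  mk k (t • x + y) (smul_add_ne_zero_of_linearIndependent h t)

lemma affinePoint_injective (h : LinearIndependent k ![x, y]) :
    Function.Injective (affinePoint h) := by
  intro s t hst
  obtain ⟨c, hc⟩ := (Projectivization.mk_eq_mk_iff' ..).mp hst
  obtain ⟨h₁, h₂⟩ := LinearIndependent.pair_iff.mp h (c * t - s) (c - 1) (by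
    rw [← sub_eq_zero.mpr hc]; module)
  linear_combination t * h₂ - h₁

lemma exists_affinePoint_eq (hV : finrank k V = 2) (h : LinearIndependent k ![x, y]) {p : ℙ k V}
    (hp : p ≠ mk k x (h.ne_zero 0)) : ∃ t, affinePoint h t = p := by
  induction p using Projectivization.ind with
  | h v hv =>
    obtain ⟨s, t, rfl⟩ := exists_smul_add_smul_eq hV h v
    have ht : t ≠ 0 := by
      rintro rfl
      exact hp ((Projectivization.mk_eq_mk_iff' ..).mpr ⟨s, by simp⟩)
    refine ⟨s / t, (Projectivization.mk_eq_mk_iff' ..).mpr ⟨t⁻¹, ?_⟩⟩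
    rw [smul_add, smul_smul, smul_smul, inv_mul_cancel₀ ht, one_smul, div_eq_inv_mul]

/-- The form `B z z` at `z = t • x + y`, as a polynomial in `t`, when `σ` is the `q`-th power
map. -/
noncomputable def isotropyPolynomial (B : V →ₛₗ[σ] V →ₗ[k] k) (q : ℕ) (x y : V) : k[X] :=
  C (B x x) * X ^ (q + 1) + C (B x y) * X ^ q + C (B y x) * X + C (B y y)

lemma eval_isotropyPolynomial (hσ : ∀ t, σ t = t ^ q) (t : k) :
    (isotropyPolynomial B q x y).eval t = B (t • x + y) (t • x + y) := by
  simp only [isotropyPolynomial, eval_add, eval_mul, eval_C, eval_pow, eval_X, map_add,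
    LinearMap.map_smulₛₗ, hσ, LinearMap.add_apply, LinearMap.smul_apply, map_smul, smul_eq_mul]
  ring

lemma natDegree_isotropyPolynomial (hq : q ≠ 0) (hx : B x x ≠ 0) :
    (isotropyPolynomial B q x y).natDegree = q + 1 := by
  unfold isotropyPolynomial
  compute_degree!
  simpa [hq] using hx

-- With `f = (a X ^ q + c) X + (b X ^ q + d)` and `f' = a X ^ q + c`, the combination
-- `a f - (a X + b) f'` is the constant `a d - b c`.
lemma separable_isotropyPolynomial (hq : (q : k) = 0)
    (hdet : B x x * B y y - B x y * B y x ≠ 0) : (isotropyPolynomial B q x y).Separable := by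
  have hderiv : derivative (isotropyPolynomial B q x y) = C (B x x) * X ^ q + C (B y x) := by
    simp [isotropyPolynomial, derivative_X_pow, hq]
  set c := B x x * B y y - B x y * B y x with hc
  refine ⟨C (c⁻¹ * B x x), - C c⁻¹ * (C (B x x) * X + C (B x y)), ?_⟩
  have hcc : C c⁻¹ * (C (B x x) * C (B y y) - C (B x y) * C (B y x)) = 1 := by
    rw [← C_mul, ← C_mul, ← C_sub, ← hc, ← C_mul, inv_mul_cancel₀ hdet, C_1]
  rw [hderiv, isotropyPolynomial, C_mul]
  linear_combination hcc

lemma apply_mul_apply_sub_ne_zero (hV : finrank k V = 2) (hB : B.SeparatingRight)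
    (h : LinearIndependent k ![x, y]) (hx : B x x ≠ 0) :
    B x x * B y y - B x y * B y x ≠ 0 := by
  intro hdet
  have hz : B x y • x + (- B x x) • y = 0 := hB _ fun z => by
    obtain ⟨s, t, rfl⟩ := exists_smul_add_smul_eq hV h z
    simp only [map_add, LinearMap.map_smulₛₗ, LinearMap.add_apply, LinearMap.smul_apply,
      smul_eq_mul, RingHom.id_apply]
    linear_combination - σ t * hdet
  exact hx (neg_eq_zero.mp (LinearIndependent.pair_iff.mp h _ _ hz).2)

lemma one_lt_of_forall_eq_pow (hσ : ∀ t, σ t = t ^ q) (hq : (q : k) = 0) : 1 < q := by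
  have h0 : q ≠ 0 := by rintro rfl; simpa using hσ 0
  have h1 : q ≠ 1 := by rintro rfl; simp at hq
  omega

variable [IsSepClosed k]

lemma ringHom_ne_id_of_forall_eq_pow (hσ : ∀ t, σ t = t ^ q) (hq : (q : k) = 0) :
    σ ≠ RingHom.id k := by
  have hq1 : 1 < q := one_lt_of_forall_eq_pow hσ hq
  rintro rfl
  obtain ⟨t, ht⟩ := IsSepClosed.exists_root_C_mul_X_pow_add_C_mul_X_add_C (1 : k) (-1) 1 hq
    (by omega) (by simp)
  simp [← hσ t] at ht

lemma ncard_isotropicPoints (hσ : ∀ t, σ t = t ^ q) (hq : (q : k) = 0) (hV : finrank k V = 2)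
    (hB : B.SeparatingRight) : (isotropicPoints B).ncard = q + 1 := by
  have : Nontrivial V := nontrivial_of_finrank_pos (R := k) (by omega)
  have hq0 : q ≠ 0 := (one_lt_of_forall_eq_pow hσ hq).ne_bot
  obtain ⟨x, hx⟩ := exists_apply_self_ne_zero (ringHom_ne_id_of_forall_eq_pow hσ hq) hB
  obtain ⟨y, hxy⟩ := exists_linearIndependent_pair_of_one_lt_finrank (R := k) (by omega : 1 < _)
    (show x ≠ 0 by rintro rfl; simp at hx)
  set f := isotropyPolynomial B q x y
  have hdeg : f.natDegree = q + 1 := natDegree_isotropyPolynomial hq0 hx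
  have hsep : f.Separable :=
    separable_isotropyPolynomial hq (apply_mul_apply_sub_ne_zero hV hB hxy hx)
  have hpoints : isotropicPoints B = affinePoint hxy '' f.rootSet k := by
    have key (t : k) : affinePoint hxy t ∈ isotropicPoints B ↔ t ∈ f.rootSet k := by
      rw [affinePoint, mk_mem_isotropicPoints, mem_rootSet_of_ne hsep.ne_zero, coe_aeval_eq_eval,
        eval_isotropyPolynomial hσ]
    ext p
    constructor
    · intro hp
      obtain ⟨t, rfl⟩ := exists_affinePoint_eq hV hxy (p := p) <| by
        rintro rfl
        exact hx ((mk_mem_isotropicPoints _).mp hp)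
      exact ⟨t, (key t).mp hp, rfl⟩
    · rintro ⟨t, ht, rfl⟩
      exact (key t).mpr ht
  rw [hpoints, Set.ncard_image_of_injective _ (affinePoint_injective hxy),
    Set.ncard_eq_toFinset_card', Set.toFinset_card, card_rootSet_eq_natDegree hsep, hdeg]
  simpa using IsSepClosed.splits_of_separable f hsep

end ProjectiveLine

section Rulings

variable {k U V W : Type*} [Field k] [AddCommGroup U] [Module k U] [AddCommGroup V] [Module k V]
  [AddCommGroup W] [Module k W] {e : U ⊗[k] W ≃ₗ[k] V} {p p' : ℙ k U}

lemma eq_zero_of_sum_tmul_eq_zero {ι : Type*} [Fintype ι] {a : ι → U}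
    (ha : LinearIndependent k a) {w : ι → W} (h : ∑ i, a i ⊗ₜ[k] w i = 0) : w = 0 := by
  classical
  obtain ⟨g, hg⟩ := (Fintype.linearCombination k a).exists_leftInverse_of_injective
    (LinearMap.ker_eq_bot.mpr (linearIndependent_iff_injective_fintypeLinearCombination.mp ha))
  have hga (i : ι) : g (a i) = Pi.single i 1 := by
    simpa using LinearMap.congr_fun hg (Pi.single i 1)
  funext j
  simpa [hga, Pi.single_apply] using
    congr(TensorProduct.lid k W (LinearMap.rTensor W (LinearMap.proj j ∘ₗ g) $h))

lemma eq_zero_and_eq_zero_of_tmul_add_tmul_eq_zero {a b : U} (h : LinearIndependent k ![a, b])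
    {u v : W} (huv : a ⊗ₜ[k] u + b ⊗ₜ[k] v = 0) : u = 0 ∧ v = 0 := by
  have := eq_zero_of_sum_tmul_eq_zero h (w := ![u, v]) (by simpa using huv)
  exact ⟨congrFun this 0, congrFun this 1⟩

lemma tmul_ne_zero {a : U} (ha : a ≠ 0) {w : W} (hw : w ≠ 0) : a ⊗ₜ[k] w ≠ 0 := fun h =>
  hw <| congrFun (eq_zero_of_sum_tmul_eq_zero (a := fun _ : Unit => a) (w := fun _ => w)
    (linearIndependent_unique_iff.mpr ha) (by simpa using h)) ()

/-- The subspace `a ⊗ W` of `V ≃ U ⊗ W` attached to the point `p = [a]`. For `U` and `W` of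
dimension two these are the lines of one ruling of the quadric of pure tensors; those of the other
ruling are obtained from the swapped isomorphism `swapEquiv e`. -/
def rulingLine (e : U ⊗[k] W ≃ₗ[k] V) (p : ℙ k U) : Submodule k V :=
  Submodule.map₂ ((TensorProduct.mk k U W).compr₂ e) p.submodule ⊤

/-- The isomorphism `e` with the two tensor factors exchanged. -/
def swapEquiv (e : U ⊗[k] W ≃ₗ[k] V) : W ⊗[k] U ≃ₗ[k] V := (TensorProduct.comm k W U).trans e

@[simp]
lemma swapEquiv_tmul (w : W) (u : U) : swapEquiv e (w ⊗ₜ u) = e (u ⊗ₜ w) := rfl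

lemma rulingLine_mk {a : U} (ha : a ≠ 0) :
    rulingLine e (mk k a ha) = LinearMap.range (e.toLinearMap ∘ₗ TensorProduct.mk k U W a) := by
  rw [rulingLine, Projectivization.submodule_mk, Submodule.map₂_span_singleton_eq_map,
    Submodule.map_top]
  rfl

lemma mem_rulingLine_mk {a : U} (ha : a ≠ 0) {z : V} :
    z ∈ rulingLine e (mk k a ha) ↔ ∃ w, e (a ⊗ₜ w) = z := by
  simp [rulingLine_mk]

lemma finrank_rulingLine : finrank k (rulingLine e p) = finrank k W := by
  induction p using Projectivization.ind with
  | h a ha =>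
    rw [rulingLine_mk]
    refine LinearMap.finrank_range_of_inj (LinearMap.ker_eq_bot.mp ?_)
    refine LinearMap.ker_eq_bot'.mpr fun w hw => by_contra fun hw0 => ?_
    exact tmul_ne_zero ha hw0 (by simpa using hw)

lemma disjoint_rulingLine (hp : p ≠ p') : Disjoint (rulingLine e p) (rulingLine e p') := by
  rw [← p.mk_rep, ← p'.mk_rep, Submodule.disjoint_def]
  intro z hz hz'
  obtain ⟨u, rfl⟩ := (mem_rulingLine_mk _).mp hz
  obtain ⟨v, hv⟩ := (mem_rulingLine_mk _).mp hz'
  have : p.rep ⊗ₜ[k] u + p'.rep ⊗ₜ[k] (-v) = 0 := by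
    rw [TensorProduct.tmul_neg, ← e.injective hv, add_neg_cancel]
  rw [(eq_zero_and_eq_zero_of_tmul_add_tmul_eq_zero
    (Projectivization.linearIndependent_pair_iff_ne.mpr hp) this).1]
  simp

lemma rulingLine_ne_bot [Nontrivial W] : rulingLine e p ≠ ⊥ := by
  induction p using Projectivization.ind with
  | h a ha =>
    obtain ⟨w, hw⟩ := exists_ne (0 : W)
    exact (Submodule.ne_bot_iff _).mpr
      ⟨_, (mem_rulingLine_mk ha).mpr ⟨w, rfl⟩, by simpa using tmul_ne_zero ha hw⟩

lemma rulingLine_injective [Nontrivial W] : Function.Injective (rulingLine e) := fun _ _ h =>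
  by_contra fun hp => rulingLine_ne_bot (disjoint_self.mp (h ▸ disjoint_rulingLine (e := e) hp))

lemma not_disjoint_rulingLine_swapEquiv (p : ℙ k U) (r : ℙ k W) :
    ¬ Disjoint (rulingLine e p) (rulingLine (swapEquiv e) r) := by
  induction p using Projectivization.ind with
  | h a ha =>
    induction r using Projectivization.ind with
    | h w hw =>
      intro h
      refine tmul_ne_zero ha hw (e.map_eq_zero_iff.mp (Submodule.disjoint_def.mp h _ ?_ ?_))
      · exact (mem_rulingLine_mk ha).mpr ⟨w, rfl⟩
      · exact (mem_rulingLine_mk hw).mpr ⟨a, rfl⟩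

lemma exists_tmul_mem_of_not_disjoint {a : U} {ha : a ≠ 0} {N : Submodule k V}
    (h : ¬ Disjoint N (rulingLine e (mk k a ha))) : ∃ w ≠ 0, e (a ⊗ₜ w) ∈ N := by
  rw [Submodule.disjoint_def] at h
  push Not at h
  obtain ⟨z, hzN, hz, hz0⟩ := h
  obtain ⟨w, rfl⟩ := (mem_rulingLine_mk ha).mp hz
  exact ⟨w, by rintro rfl; simp at hz0, hzN⟩

lemma tmul_smul_mem_and_tmul_smul_mem {N : Submodule k V} (hN : finrank k N = 2) {a b : U}
    (hab : LinearIndependent k ![a, b]) {u v w : W} (hu : u ≠ 0) (hv : v ≠ 0)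
    (hau : e (a ⊗ₜ u) ∈ N) (hbv : e (b ⊗ₜ v) ∈ N) {s t : k}
    (hw : e ((s • a + t • b) ⊗ₜ w) ∈ N) : e (a ⊗ₜ (s • w)) ∈ N ∧ e (b ⊗ₜ (t • w)) ∈ N := by
  have hspan : LinearIndependent k ![(⟨_, hau⟩ : N), ⟨_, hbv⟩] := by
    refine LinearIndependent.pair_iff.mpr fun c d h => ?_
    have hcd : a ⊗ₜ[k] (c • u) + b ⊗ₜ[k] (d • v) = 0 := e.map_eq_zero_iff.mp <| by
      simpa using congr(($h : V))
    simpa [hu, hv] using eq_zero_and_eq_zero_of_tmul_add_tmul_eq_zero hab hcd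
  obtain ⟨c, d, hcd⟩ := exists_smul_add_smul_eq hN hspan ⟨_, hw⟩
  have hdiff : a ⊗ₜ[k] (c • u - s • w) + b ⊗ₜ[k] (d • v - t • w) = 0 := by
    have : c • a ⊗ₜ[k] u + d • b ⊗ₜ[k] v = (s • a + t • b) ⊗ₜ w := e.injective <| by
      simpa using congr(($hcd : V))
    rw [TensorProduct.add_tmul] at this
    simp only [TensorProduct.tmul_sub, TensorProduct.tmul_smul, ← TensorProduct.smul_tmul']
      at this ⊢
    rw [sub_add_sub_comm, this, sub_self]
  obtain ⟨hcu, hdv⟩ := eq_zero_and_eq_zero_of_tmul_add_tmul_eq_zero hab hdiff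
  rw [← sub_eq_zero.mp hcu, ← sub_eq_zero.mp hdv]
  simpa using ⟨N.smul_mem c hau, N.smul_mem d hbv⟩

lemma exists_rulingLine_swapEquiv_eq (hU : finrank k U = 2) {N : Submodule k V}
    (hN : finrank k N = 2) {p₁ p₂ p₃ : ℙ k U} (h₁₂ : p₁ ≠ p₂) (h₁₃ : p₁ ≠ p₃) (h₂₃ : p₂ ≠ p₃)
    (h₁ : ¬ Disjoint N (rulingLine e p₁)) (h₂ : ¬ Disjoint N (rulingLine e p₂))
    (h₃ : ¬ Disjoint N (rulingLine e p₃)) : ∃ r, rulingLine (swapEquiv e) r = N := by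
  have hab := Projectivization.linearIndependent_pair_iff_ne.mpr h₁₂
  have hac := Projectivization.linearIndependent_pair_iff_ne.mpr h₁₃
  have hbc := Projectivization.linearIndependent_pair_iff_ne.mpr h₂₃
  rw [← Projectivization.mk_rep p₁] at h₁
  rw [← Projectivization.mk_rep p₂] at h₂
  rw [← Projectivization.mk_rep p₃] at h₃
  obtain ⟨u, hu, hau⟩ := exists_tmul_mem_of_not_disjoint h₁
  obtain ⟨v, hv, hbv⟩ := exists_tmul_mem_of_not_disjoint h₂
  obtain ⟨w, hw, hcw⟩ := exists_tmul_mem_of_not_disjoint h₃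
  obtain ⟨s, t, hst⟩ := exists_smul_add_smul_eq hU hab p₃.rep
  have hs : s ≠ 0 := by
    rintro rfl
    simpa using (LinearIndependent.pair_iff.mp hbc t (-1) (by simp [← hst])).2
  have ht : t ≠ 0 := by
    rintro rfl
    simpa using (LinearIndependent.pair_iff.mp hac s (-1) (by simp [← hst])).2
  obtain ⟨haw, hbw⟩ := tmul_smul_mem_and_tmul_smul_mem hN hab hu hv hau hbv (hst ▸ hcw)
  simp only [TensorProduct.tmul_smul, map_smul, N.smul_mem_iff hs, N.smul_mem_iff ht] at haw hbw
  have hfin : FiniteDimensional k N := .of_finrank_pos (by omega)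
  refine ⟨mk k w hw, Submodule.eq_of_le_of_finrank_eq (fun z hz => ?_) ?_⟩
  · obtain ⟨x, rfl⟩ := (mem_rulingLine_mk hw).mp hz
    obtain ⟨c, d, rfl⟩ := exists_smul_add_smul_eq hU hab x
    simpa [TensorProduct.tmul_add] using
      N.add_mem (N.smul_mem c haw) (N.smul_mem d hbw)
  · rw [finrank_rulingLine, hU, hN]

end Rulings

section Complements

variable {k V : Type*} [Field k] [AddCommGroup V] [Module k V] {L₁ L₂ L₃ : Submodule k V}
  (h₁₂ : IsCompl L₁ L₂) (h₁₃ : IsCompl L₁ L₃) (h₂₃ : IsCompl L₂ L₃)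

/-- For two complements `L` and `N` of `M`, the isomorphism `N ≃ L` given by the projection to `L`
along `M`. -/
noncomputable def complEquiv {L M N : Submodule k V} (hL : IsCompl M L) (hN : IsCompl M N) :
    N ≃ₗ[k] L :=
  (M.quotientEquivOfIsCompl N hN).symm ≪≫ₗ M.quotientEquivOfIsCompl L hL

lemma complEquiv_apply {L M N : Submodule k V} (hL : IsCompl M L) (hN : IsCompl M N) (z : N) :
    complEquiv hL hN z = L.projectionOnto M hL.symm z := by
  simp [complEquiv]

lemma complEquiv_add_complEquiv (z : L₃) :
    (complEquiv h₁₂.symm h₂₃ z + complEquiv h₁₂ h₁₃ z : V) = z := by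
  simp [complEquiv_apply, Submodule.projection_add_projection_eq_self]

/-- Three pairwise complementary subspaces identify `V` with `k² ⊗ L₃`, in such a way that `L₁`,
`L₂` and `L₃` become the ruling lines over the points `(1, 0)`, `(0, 1)` and `(1, 1)`. -/
noncomputable def segreEquiv : (k × k) ⊗[k] L₃ ≃ₗ[k] V :=
  TensorProduct.prodLeft k k k k L₃ ≪≫ₗ
    ((TensorProduct.lid k L₃ ≪≫ₗ complEquiv h₁₂.symm h₂₃).prodCongr
      (TensorProduct.lid k L₃ ≪≫ₗ complEquiv h₁₂ h₁₃)) ≪≫ₗ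
    Submodule.prodEquivOfIsCompl L₁ L₂ h₁₂

lemma segreEquiv_tmul (s t : k) (z : L₃) :
    segreEquiv h₁₂ h₁₃ h₂₃ ((s, t) ⊗ₜ z) =
      s • (complEquiv h₁₂.symm h₂₃ z : V) + t • (complEquiv h₁₂ h₁₃ z : V) := by
  simp [segreEquiv]

lemma rulingLine_segreEquiv_one_zero :
    rulingLine (segreEquiv h₁₂ h₁₃ h₂₃) (mk k (1, 0) (by simp)) = L₁ := by
  ext z
  simp only [mem_rulingLine_mk, segreEquiv_tmul, one_smul, zero_smul, add_zero]
  exact ⟨fun ⟨w, hw⟩ => hw ▸ Subtype.property _,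
    fun hz => ⟨(complEquiv h₁₂.symm h₂₃).symm ⟨z, hz⟩, by simp⟩⟩

lemma rulingLine_segreEquiv_zero_one :
    rulingLine (segreEquiv h₁₂ h₁₃ h₂₃) (mk k (0, 1) (by simp)) = L₂ := by
  ext z
  simp only [mem_rulingLine_mk, segreEquiv_tmul, one_smul, zero_smul, zero_add]
  exact ⟨fun ⟨w, hw⟩ => hw ▸ Subtype.property _,
    fun hz => ⟨(complEquiv h₁₂ h₁₃).symm ⟨z, hz⟩, by simp⟩⟩

lemma rulingLine_segreEquiv_one_one :
    rulingLine (segreEquiv h₁₂ h₁₃ h₂₃) (mk k (1, 1) (by simp)) = L₃ := by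
  ext z
  simp [mem_rulingLine_mk, segreEquiv_tmul, complEquiv_add_complEquiv]

end Complements

lemma subset_or_subset_of_pairwise_disjoint {α : Type*} [PartialOrder α] [OrderBot α]
    {𝒯 ℒ ℳ : Set α} (h𝒯 : 𝒯.Pairwise Disjoint) (hsub : 𝒯 ⊆ ℒ ∪ ℳ)
    (hmeet : ∀ L ∈ ℒ, ∀ M ∈ ℳ, ¬ Disjoint L M) : 𝒯 ⊆ ℒ ∨ 𝒯 ⊆ ℳ := by
  by_contra! h
  obtain ⟨M, hM, hMℒ⟩ := Set.not_subset.mp h.1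
  obtain ⟨L, hL, hLℳ⟩ := Set.not_subset.mp h.2
  have hL' : L ∈ ℒ := (hsub hL).resolve_right hLℳ
  have hM' : M ∈ ℳ := (hsub hM).resolve_left hMℒ
  exact hmeet L hL' M hM' (h𝒯 hL hM fun hLM => hMℒ (hLM ▸ hL'))

section Factorization

/-- A decomposition `V ≃ U ⊗ W` under which the sesquilinear form `B` becomes the product of a form
on `U` and a form on `W`. In dimension four it exhibits the restriction of `B x x` to a quadric
`ℙ¹ × ℙ¹` as a product of a form in the first coordinate and a form in the second. -/
structure SegreFactorization {k V : Type*} [Field k] [AddCommGroup V] [Module k V] {σ : k →+* k}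
    (B : V →ₛₗ[σ] V →ₗ[k] k) (U W : Type*) [AddCommGroup U] [Module k U] [AddCommGroup W]
    [Module k W] where
  equiv : U ⊗[k] W ≃ₗ[k] V
  left : U →ₛₗ[σ] U →ₗ[k] k
  right : W →ₛₗ[σ] W →ₗ[k] k
  apply_tmul (a b : U) (u v : W) : B (equiv (a ⊗ₜ u)) (equiv (b ⊗ₜ v)) = left a b * right u v

namespace SegreFactorization

variable {k U V W : Type*} [Field k] [AddCommGroup U] [Module k U] [AddCommGroup V] [Module k V]
  [AddCommGroup W] [Module k W] {σ : k →+* k} {B : V →ₛₗ[σ] V →ₗ[k] k}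

/-- The factorization with the two factors exchanged. -/
def swap (F : SegreFactorization B U W) : SegreFactorization B W U where
  equiv := swapEquiv F.equiv
  left := F.right
  right := F.left
  apply_tmul u v a b := by simp [F.apply_tmul, mul_comm]

variable (F : SegreFactorization B U W)

lemma swap_swap : F.swap.swap = F := by
  cases F
  simp only [swap, SegreFactorization.mk.injEq, and_true]
  exact LinearEquiv.toLinearMap_injective (TensorProduct.ext' fun _ _ => rfl)

/-- The lines of the ruling `{a ⊗ W}` that lie on `B x x = 0`. -/
def lines : Set (Submodule k V) := rulingLine F.equiv '' isotropicPoints F.left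

lemma left_separatingRight [Nontrivial W] (hB : B.SeparatingRight) : F.left.SeparatingRight := by
  intro b hb
  obtain ⟨v, hv⟩ := exists_ne (0 : W)
  by_contra hb0
  refine tmul_ne_zero hb0 hv (F.equiv.map_eq_zero_iff.mp (hB _ fun x => ?_))
  obtain ⟨x, rfl⟩ := F.equiv.surjective x
  induction x using TensorProduct.induction_on with
  | zero => simp
  | tmul a u => simp [F.apply_tmul, hb a]
  | add x y hx hy => simp [hx, hy]

lemma isIsotropicSubspace_rulingLine {p : ℙ k U} (hp : p ∈ isotropicPoints F.left) :
    IsIsotropicSubspace B (rulingLine F.equiv p) := by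
  induction p using Projectivization.ind with
  | h a ha =>
    intro z hz
    obtain ⟨w, rfl⟩ := (mem_rulingLine_mk ha).mp hz
    rw [F.apply_tmul, (mk_mem_isotropicPoints ha).mp hp, zero_mul]

lemma mem_isotropicPoints_of_isIsotropicSubspace [Nontrivial W] (hσ : σ ≠ RingHom.id k)
    (hright : F.right.SeparatingRight) {p : ℙ k U}
    (hp : IsIsotropicSubspace B (rulingLine F.equiv p)) : p ∈ isotropicPoints F.left := by
  induction p using Projectivization.ind with
  | h a ha =>
    obtain ⟨w, hw⟩ := exists_apply_self_ne_zero hσ hright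
    have := hp _ ((mem_rulingLine_mk ha).mpr ⟨w, rfl⟩)
    rw [F.apply_tmul] at this
    exact (mk_mem_isotropicPoints ha).mpr ((mul_eq_zero.mp this).resolve_right hw)

lemma rulingLine_mem_lines [Nontrivial W] (hσ : σ ≠ RingHom.id k)
    (hright : F.right.SeparatingRight) {p : ℙ k U}
    (hp : IsIsotropicSubspace B (rulingLine F.equiv p)) : rulingLine F.equiv p ∈ F.lines :=
  ⟨p, F.mem_isotropicPoints_of_isIsotropicSubspace hσ hright hp, rfl⟩

variable {F}

lemma isIsotropicSubspace_of_mem_lines {L : Submodule k V} (hL : L ∈ F.lines) :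
    IsIsotropicSubspace B L := by
  obtain ⟨p, hp, rfl⟩ := hL
  exact F.isIsotropicSubspace_rulingLine hp

lemma finrank_of_mem_lines {L : Submodule k V} (hL : L ∈ F.lines) :
    finrank k L = finrank k W := by
  obtain ⟨p, -, rfl⟩ := hL
  exact finrank_rulingLine

lemma pairwise_disjoint_lines : F.lines.Pairwise Disjoint := by
  rintro _ ⟨p, -, rfl⟩ _ ⟨p', -, rfl⟩ h
  exact disjoint_rulingLine fun hp => h (hp ▸ rfl)

lemma not_disjoint_of_mem_lines {L M : Submodule k V} (hL : L ∈ F.lines)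
    (hM : M ∈ F.swap.lines) : ¬ Disjoint L M := by
  obtain ⟨p, -, rfl⟩ := hL
  obtain ⟨r, -, rfl⟩ := hM
  exact not_disjoint_rulingLine_swapEquiv p r

lemma disjoint_lines_swap_lines (h : 1 < F.lines.ncard) : Disjoint F.lines F.swap.lines := by
  refine Set.disjoint_left.mpr fun L hL hL' => ?_
  obtain ⟨M, hM, hML⟩ := Set.exists_ne_of_one_lt_ncard h L
  exact not_disjoint_of_mem_lines hM hL' (pairwise_disjoint_lines hM hL hML)

lemma mem_swap_lines_of_not_disjoint [Nontrivial W] (hσ : σ ≠ RingHom.id k)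
    (hU : finrank k U = 2) (hB : B.SeparatingRight) {𝒯 : Set (Submodule k V)}
    (h𝒯 : 𝒯 ⊆ F.lines) (hcard : 2 < 𝒯.ncard) {M : Submodule k V} (hM : finrank k M = 2)
    (hMiso : IsIsotropicSubspace B M) (hmeet : ∀ L ∈ 𝒯, ¬ Disjoint M L) : M ∈ F.swap.lines := by
  have : Nontrivial U := nontrivial_of_finrank_pos (R := k) (by omega)
  obtain ⟨L₁, L₂, L₃, hL₁, hL₂, hL₃, h₁₂, h₁₃, h₂₃⟩ :=
    (Set.two_lt_ncard_iff (Set.finite_of_ncard_pos (by omega))).mp hcard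
  obtain ⟨p₁, -, rfl⟩ := h𝒯 hL₁
  obtain ⟨p₂, -, rfl⟩ := h𝒯 hL₂
  obtain ⟨p₃, -, rfl⟩ := h𝒯 hL₃
  obtain ⟨r, rfl⟩ := exists_rulingLine_swapEquiv_eq hU hM (ne_of_apply_ne _ h₁₂)
    (ne_of_apply_ne _ h₁₃) (ne_of_apply_ne _ h₂₃) (hmeet _ hL₁) (hmeet _ hL₂) (hmeet _ hL₃)
  exact F.swap.rulingLine_mem_lines hσ (F.left_separatingRight hB) hMiso

section IsSepClosed

variable [IsSepClosed k] {q : ℕ}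

lemma ncard_lines [Nontrivial W] (hσ : ∀ t, σ t = t ^ q) (hq : (q : k) = 0)
    (hU : finrank k U = 2) (hB : B.SeparatingRight) : F.lines.ncard = q + 1 := by
  rw [lines, Set.ncard_image_of_injective _ rulingLine_injective,
    ncard_isotropicPoints hσ hq hU (F.left_separatingRight hB)]

lemma eq_swap_lines_of_not_disjoint (hσ : ∀ t, σ t = t ^ q) (hq : (q : k) = 0)
    (hU : finrank k U = 2) (hW : finrank k W = 2) (hB : B.SeparatingRight)
    {𝒯 ℳ : Set (Submodule k V)} (h𝒯 : 𝒯 ⊆ F.lines) (hcard : 2 < 𝒯.ncard)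
    (hℳ : ∀ M ∈ ℳ, finrank k M = 2 ∧ IsIsotropicSubspace B M) (hℳcard : ℳ.ncard = q + 1)
    (hmeet : ∀ L ∈ 𝒯, ∀ M ∈ ℳ, ¬ Disjoint L M) : ℳ = F.swap.lines := by
  have : Nontrivial U := nontrivial_of_finrank_pos (R := k) (by omega)
  have : Nontrivial W := nontrivial_of_finrank_pos (R := k) (by omega)
  have hswap : F.swap.lines.ncard = q + 1 := ncard_lines hσ hq hW hB
  refine Set.eq_of_subset_of_ncard_le (fun M hM => ?_) (hswap.trans hℳcard.symm).le
    (Set.finite_of_ncard_pos (by omega))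
  exact mem_swap_lines_of_not_disjoint (ringHom_ne_id_of_forall_eq_pow hσ hq) hU hB h𝒯 hcard
    (hℳ M hM).1 (hℳ M hM).2 fun L hL h => hmeet L hL M hM h.symm

lemma eq_lines_and_eq_swap_lines (hσ : ∀ t, σ t = t ^ q) (hq : (q : k) = 0)
    (hU : finrank k U = 2) (hW : finrank k W = 2) (hB : B.SeparatingRight)
    {𝒯 ℒ ℳ : Set (Submodule k V)} (h𝒯 : 𝒯 ⊆ F.lines) (hcard : 2 < 𝒯.ncard) (h𝒯ℒ : 𝒯 ⊆ ℒ)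
    (hℒℳ : ∀ L ∈ ℒ ∪ ℳ, finrank k L = 2 ∧ IsIsotropicSubspace B L)
    (hℒcard : ℒ.ncard = q + 1) (hℳcard : ℳ.ncard = q + 1)
    (hmeet : ∀ L ∈ ℒ, ∀ M ∈ ℳ, ¬ Disjoint L M) : ℒ = F.lines ∧ ℳ = F.swap.lines := by
  have hℳ : ℳ = F.swap.lines := eq_swap_lines_of_not_disjoint hσ hq hU hW hB h𝒯 hcard
    (fun M hM => hℒℳ M (.inr hM)) hℳcard fun L hL => hmeet L (h𝒯ℒ hL)
  have hℒ : ℒ = F.swap.swap.lines := eq_swap_lines_of_not_disjoint hσ hq hW hU hB hℳ.subset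
    (by have := one_lt_of_forall_eq_pow hσ hq; omega) (fun L hL => hℒℳ L (.inl hL)) hℒcard
    fun M hM L hL h => hmeet L hL M hM h.symm
  exact ⟨F.swap_swap ▸ hℒ, hℳ⟩

lemma union_eq_lines_union_swap_lines (hσ : ∀ t, σ t = t ^ q) (hq : (q : k) = 0)
    (hU : finrank k U = 2) (hW : finrank k W = 2) (hB : B.SeparatingRight)
    {𝒯 ℒ ℳ : Set (Submodule k V)} (h𝒯 : 𝒯 ⊆ F.lines) (hcard : 2 < 𝒯.ncard) (hsub : 𝒯 ⊆ ℒ ∪ ℳ)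
    (hℒℳ : ∀ L ∈ ℒ ∪ ℳ, finrank k L = 2 ∧ IsIsotropicSubspace B L)
    (hℒcard : ℒ.ncard = q + 1) (hℳcard : ℳ.ncard = q + 1)
    (hmeet : ∀ L ∈ ℒ, ∀ M ∈ ℳ, ¬ Disjoint L M) : ℒ ∪ ℳ = F.lines ∪ F.swap.lines := by
  rcases subset_or_subset_of_pairwise_disjoint (pairwise_disjoint_lines.mono h𝒯) hsub hmeet
    with h | h
  · obtain ⟨rfl, rfl⟩ :=
      eq_lines_and_eq_swap_lines hσ hq hU hW hB h𝒯 hcard h hℒℳ hℒcard hℳcard hmeet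
    rfl
  · obtain ⟨rfl, rfl⟩ := eq_lines_and_eq_swap_lines hσ hq hU hW hB h𝒯 hcard h
      (Set.union_comm ℒ ℳ ▸ hℒℳ) hℳcard hℒcard fun M hM L hL hML => hmeet L hL M hM hML.symm
    exact Set.union_comm ..

end IsSepClosed

end SegreFactorization

section ThreeSubspaces

variable {k V : Type*} [Field k] [AddCommGroup V] [Module k V] {σ : k →+* k}
  {B : V →ₛₗ[σ] V →ₗ[k] k} {L₁ L₂ L₃ : Submodule k V}

/-- The `σ`-twisted determinant form on `k²`, whose isotropic points are those fixed by `σ`. -/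
def twistedDet (σ : k →+* k) : k × k →ₛₗ[σ] k × k →ₗ[k] k :=
  LinearMap.mk₂'ₛₗ σ (RingHom.id k) (fun a b => σ a.1 * b.2 - σ a.2 * b.1)
    (fun _ _ _ => by simp only [Prod.fst_add, Prod.snd_add, map_add]; ring)
    (fun _ _ _ => by simp only [Prod.smul_fst, Prod.smul_snd, smul_eq_mul, map_mul]; ring)
    (fun _ _ _ => by simp only [Prod.fst_add, Prod.snd_add]; ring)
    (fun _ _ _ => by
      simp only [Prod.smul_fst, Prod.smul_snd, smul_eq_mul, RingHom.id_apply]; ring)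

lemma twistedDet_apply (a b : k × k) : twistedDet σ a b = σ a.1 * b.2 - σ a.2 * b.1 := rfl

-- Isotropy of `L₁` and `L₂` leaves only the two mixed terms, which isotropy of `L₃` makes opposite.
lemma apply_segreEquiv_tmul (hσ : σ ≠ RingHom.id k) (h₁ : IsIsotropicSubspace B L₁)
    (h₂ : IsIsotropicSubspace B L₂) (h₃ : IsIsotropicSubspace B L₃) (h₁₂ : IsCompl L₁ L₂)
    (h₁₃ : IsCompl L₁ L₃) (h₂₃ : IsCompl L₂ L₃) (a b : k × k) (z w : L₃) :
    B (segreEquiv h₁₂ h₁₃ h₂₃ (a ⊗ₜ z)) (segreEquiv h₁₂ h₁₃ h₂₃ (b ⊗ₜ w)) =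
      twistedDet σ a b * B (complEquiv h₁₂.symm h₂₃ z) w := by
  obtain ⟨s, s'⟩ := a
  obtain ⟨t, t'⟩ := b
  rw [← complEquiv_add_complEquiv h₁₂ h₁₃ h₂₃ w, segreEquiv_tmul, segreEquiv_tmul,
    twistedDet_apply]
  have h₃zw := h₃.apply_eq_zero hσ z.2 w.2
  rw [← complEquiv_add_complEquiv h₁₂ h₁₃ h₂₃ z, ← complEquiv_add_complEquiv h₁₂ h₁₃ h₂₃ w]
    at h₃zw
  set z₁ := complEquiv h₁₂.symm h₂₃ z
  set z₂ := complEquiv h₁₂ h₁₃ z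
  set w₁ := complEquiv h₁₂.symm h₂₃ w
  set w₂ := complEquiv h₁₂ h₁₃ w
  have h₁zw : B z₁ w₁ = 0 := h₁.apply_eq_zero hσ z₁.2 w₁.2
  have h₂zw : B z₂ w₂ = 0 := h₂.apply_eq_zero hσ z₂.2 w₂.2
  simp only [map_add, LinearMap.add_apply, LinearMap.map_smulₛₗ, LinearMap.smul_apply, smul_eq_mul,
    RingHom.id_apply, h₁zw, h₂zw] at h₃zw ⊢
  linear_combination σ s' * t * h₃zw

/-- The factorization determined by three pairwise complementary isotropic subspaces. -/
noncomputable def SegreFactorization.ofIsCompl (hσ : σ ≠ RingHom.id k)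
    (h₁ : IsIsotropicSubspace B L₁) (h₂ : IsIsotropicSubspace B L₂)
    (h₃ : IsIsotropicSubspace B L₃) (h₁₂ : IsCompl L₁ L₂) (h₁₃ : IsCompl L₁ L₃)
    (h₂₃ : IsCompl L₂ L₃) : SegreFactorization B (k × k) L₃ where
  equiv := segreEquiv h₁₂ h₁₃ h₂₃
  left := twistedDet σ
  right := (B.domRestrict₁₂ L₁ L₃).comp (complEquiv h₁₂.symm h₂₃).toLinearMap
  apply_tmul := apply_segreEquiv_tmul hσ h₁ h₂ h₃ h₁₂ h₁₃ h₂₃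

lemma exists_segreFactorization (hσ : σ ≠ RingHom.id k)
    (h₁ : IsIsotropicSubspace B L₁) (h₂ : IsIsotropicSubspace B L₂)
    (h₃ : IsIsotropicSubspace B L₃) (h₁₂ : IsCompl L₁ L₂) (h₁₃ : IsCompl L₁ L₃)
    (h₂₃ : IsCompl L₂ L₃) :
    ∃ F : SegreFactorization B (k × k) L₃, L₁ ∈ F.lines ∧ L₂ ∈ F.lines ∧ L₃ ∈ F.lines := by
  refine ⟨.ofIsCompl hσ h₁ h₂ h₃ h₁₂ h₁₃ h₂₃,
    ⟨_, ?_, rulingLine_segreEquiv_one_zero h₁₂ h₁₃ h₂₃⟩,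
    ⟨_, ?_, rulingLine_segreEquiv_zero_one h₁₂ h₁₃ h₂₃⟩,
    ⟨_, ?_, rulingLine_segreEquiv_one_one h₁₂ h₁₃ h₂₃⟩⟩ <;>
  simp [mk_mem_isotropicPoints, SegreFactorization.ofIsCompl, twistedDet_apply]

end ThreeSubspaces

end Factorization

section ExtremalSurface

variable {k : Type*} [Field k]

section SesquilinearForm

variable {n : Type*} [Fintype n] [DecidableEq n] (p e : ℕ) [ExpChar k p]

/-- The sesquilinear form `∑ i j, A i j * x i ^ (p ^ e) * y j`, whose diagonal is the Frobenius form
of `A`. -/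
noncomputable def frobSesqForm (A : Matrix n n k) :
    (n → k) →ₛₗ[iterateFrobenius k p e] (n → k) →ₗ[k] k :=
  Matrix.toLinearMapₛₗ₂' k (iterateFrobenius k p e) (RingHom.id k) A

lemma frobSesqForm_apply_self (A : Matrix (Fin 4) (Fin 4) k) (x : Fin 4 → k) :
    frobSesqForm p e A x x = frobForm (p ^ e) A x := by
  simp only [frobSesqForm, Matrix.toLinearMapₛₗ₂'_apply, iterateFrobenius_def, smul_eq_mul,
    RingHom.id_apply, frobForm]
  exact Finset.sum_congr rfl fun i _ => Finset.sum_congr rfl fun j _ => by ring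

lemma separatingRight_frobSesqForm {A : Matrix n n k} (hA : IsUnit A) :
    (frobSesqForm p e A).SeparatingRight := by
  intro y hy
  refine Matrix.mulVec_injective_of_isUnit hA ?_
  rw [Matrix.mulVec_zero]
  funext i
  simpa [frobSesqForm, Matrix.toLinearMapₛₗ₂'_apply, Pi.single_apply, Matrix.mulVec,
    dotProduct, mul_comm] using hy (Pi.single i 1)

lemma isLineOn_extremalCone_iff {A : Matrix (Fin 4) (Fin 4) k} {L : Submodule k (Fin 4 → k)} :
    IsLineOn (extremalCone k (p ^ e) A) L ↔
      finrank k L = 2 ∧ IsIsotropicSubspace (frobSesqForm p e A) L := by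
  simp only [IsIsotropicSubspace, frobSesqForm_apply_self]
  rfl

end SesquilinearForm

section SkewLines

variable {L M : Submodule k (Fin 4 → k)}

lemma SkewLine.isCompl (h : SkewLine L M) (hL : IsLine L) (hM : IsLine M) : IsCompl L M := by
  refine (Submodule.isCompl_iff_disjoint L M ?_).mpr (disjoint_iff.mpr h)
  rw [IsLine] at hL hM
  simp [hL, hM]

lemma SkewLine.ne (h : SkewLine L M) (hL : IsLine L) : L ≠ M := by
  rintro rfl
  obtain rfl : L = ⊥ := inf_idem L ▸ h
  simp [IsLine] at hL

end SkewLines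

section QuadricConfig

variable [IsSepClosed k] {p e : ℕ} [ExpChar k p] {A : Matrix (Fin 4) (Fin 4) k} {U W : Type*}
  [AddCommGroup U] [Module k U] [AddCommGroup W] [Module k W]
  {F : SegreFactorization (frobSesqForm p e A) U W}

lemma isQuadricConfig_lines_union_swap_lines (hq : ((p ^ e : ℕ) : k) = 0)
    (hU : finrank k U = 2) (hW : finrank k W = 2) (hA : IsUnit A) :
    IsQuadricConfig (p ^ e + 1) (extremalCone k (p ^ e) A) (F.lines ∪ F.swap.lines) := by
  have : Nontrivial U := nontrivial_of_finrank_pos (R := k) (by omega)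
  have : Nontrivial W := nontrivial_of_finrank_pos (R := k) (by omega)
  have hσ := iterateFrobenius_def (R := k) p e
  have hB := separatingRight_frobSesqForm p e hA
  have hcard : F.lines.ncard = p ^ e + 1 := SegreFactorization.ncard_lines hσ hq hU hB
  have hcard' : F.swap.lines.ncard = p ^ e + 1 := SegreFactorization.ncard_lines hσ hq hW hB
  have hdisj := F.disjoint_lines_swap_lines
    (by have := one_lt_of_forall_eq_pow hσ hq; omega)
  refine ⟨?_, ?_, F.lines, F.swap.lines, rfl, hcard, hcard', ?_, ?_, ?_⟩
  · rw [Set.ncard_union_eq hdisj (Set.finite_of_ncard_pos (by omega))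
      (Set.finite_of_ncard_pos (by omega)), hcard, hcard', two_mul]
  · rintro L (hL | hL) <;>
    exact (isLineOn_extremalCone_iff p e).mpr
      ⟨by rwa [SegreFactorization.finrank_of_mem_lines hL],
        SegreFactorization.isIsotropicSubspace_of_mem_lines hL⟩
  · exact fun L hL M hM h => disjoint_iff.mp (F.pairwise_disjoint_lines hL hM h)
  · exact fun L hL M hM h => disjoint_iff.mp (F.swap.pairwise_disjoint_lines hL hM h)
  · exact fun L hL M hM h => F.not_disjoint_of_mem_lines hL hM (disjoint_iff.mpr h)

lemma IsQuadricConfig.eq_lines_union_swap_lines {S 𝒯 : Set (Submodule k (Fin 4 → k))}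
    (hS : IsQuadricConfig (p ^ e + 1) (extremalCone k (p ^ e) A) S)
    (hq : ((p ^ e : ℕ) : k) = 0) (hU : finrank k U = 2) (hW : finrank k W = 2) (hA : IsUnit A)
    (h𝒯 : 𝒯 ⊆ F.lines) (hcard : 2 < 𝒯.ncard) (h𝒯S : 𝒯 ⊆ S) : S = F.lines ∪ F.swap.lines := by
  obtain ⟨-, hlines, ℒ, ℳ, rfl, hℒ, hℳ, -, -, hmeet⟩ := hS
  exact F.union_eq_lines_union_swap_lines (iterateFrobenius_def p e) hq hU hW
    (separatingRight_frobSesqForm p e hA) h𝒯 hcard h𝒯S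
    (fun L hL => (isLineOn_extremalCone_iff p e).mp (hlines L hL)) hℒ hℳ
    fun L hL M hM h => hmeet L hL M hM (disjoint_iff.mp h)

end QuadricConfig

end ExtremalSurface

theorem triple_skew_in_unique_quadric_config_general {k : Type*} [Field k] [IsSepClosed k]
    (p e q : ℕ) (hp : p.Prime) (hchar : CharP k p) (he : 1 ≤ e) (hq : q = p ^ e)
    (A : Matrix (Fin 4) (Fin 4) k) (hA : IsUnit A)
    (L₁ L₂ L₃ : Submodule k (Fin 4 → k))
    (h₁ : IsLineOn (extremalCone k q A) L₁)
    (h₂ : IsLineOn (extremalCone k q A) L₂)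
    (h₃ : IsLineOn (extremalCone k q A) L₃)
    (h12 : SkewLine L₁ L₂) (h13 : SkewLine L₁ L₃) (h23 : SkewLine L₂ L₃) :
    ∃! S : Set (Submodule k (Fin 4 → k)),
      IsQuadricConfig (q + 1) (extremalCone k q A) S ∧ L₁ ∈ S ∧ L₂ ∈ S ∧ L₃ ∈ S := by
  subst hq
  have : ExpChar k p := .prime hp
  have hq : ((p ^ e : ℕ) : k) = 0 := by simp [CharP.cast_eq_zero, Nat.one_le_iff_ne_zero.mp he]
  have hW : finrank k L₃ = 2 := h₃.1
  have hcard : 2 < ({L₁, L₂, L₃} : Set (Submodule k (Fin 4 → k))).ncard := by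
    rw [Set.ncard_eq_three.mpr ⟨_, _, _, h12.ne h₁.1, h13.ne h₁.1, h23.ne h₂.1, rfl⟩]
    decide
  obtain ⟨F, hL₁, hL₂, hL₃⟩ := exists_segreFactorization
    (ringHom_ne_id_of_forall_eq_pow (iterateFrobenius_def p e) hq)
    ((isLineOn_extremalCone_iff p e).mp h₁).2 ((isLineOn_extremalCone_iff p e).mp h₂).2
    ((isLineOn_extremalCone_iff p e).mp h₃).2
    (h12.isCompl h₁.1 h₂.1) (h13.isCompl h₁.1 h₃.1) (h23.isCompl h₂.1 h₃.1)
  refine ⟨F.lines ∪ F.swap.lines, ⟨?_, .inl hL₁, .inl hL₂, .inl hL₃⟩, ?_⟩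
  · exact isQuadricConfig_lines_union_swap_lines hq (by simp) hW hA
  · rintro S ⟨hS, hS₁, hS₂, hS₃⟩
    refine hS.eq_lines_union_swap_lines hq (by simp) hW hA (𝒯 := {L₁, L₂, L₃}) ?_ hcard ?_ <;>
    simp [Set.insert_subset_iff, *]

/-- On a smooth extremal surface `X` of degree `d = q+1`,
any three pairwise skew lines on `X` are contained in exactly one quadric
configuration on `X`. -/
theorem triple_skew_in_unique_quadric_config {k : Type*} [Field k] [IsAlgClosed k]
    (p e q : ℕ) (hp : p.Prime) (hchar : CharP k p) (he : 1 ≤ e) (hq : q = p ^ e)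
    (A : Matrix (Fin 4) (Fin 4) k) (hA : IsUnit A)
    (L₁ L₂ L₃ : Submodule k (Fin 4 → k))
    (h₁ : IsLineOn (extremalCone k q A) L₁)
    (h₂ : IsLineOn (extremalCone k q A) L₂)
    (h₃ : IsLineOn (extremalCone k q A) L₃)
    (h12 : SkewLine L₁ L₂) (h13 : SkewLine L₁ L₃) (h23 : SkewLine L₂ L₃) :
    ∃! S : Set (Submodule k (Fin 4 → k)),
      IsQuadricConfig (q + 1) (extremalCone k q A) S ∧ L₁ ∈ S ∧ L₂ ∈ S ∧ L₃ ∈ S :=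
  triple_skew_in_unique_quadric_config_general p e q hp hchar he hq A hA L₁ L₂ L₃ h₁ h₂ h₃
    h12 h13 h23
end

section
/- Let X be a smooth extremal surface of degree d = q+1 in ℙ³(k). Then the number N of quadric configurations on X satisfies 2·N = (q³+1)(q²+1)q⁴; that is, X contains exactly ½(q³+1)(q²+1)q⁴ quadric configurations. -/
open Module

/-!
Polarize the Frobenius form to `B x y = ∑ i, ∑ j, A i j * x i ^ q * y j`, which is `q`-semilinear
in `x` and linear in `y`. The lines on the surface are the `2`-dimensional subspaces on which `B`
vanishes, and by Lang's theorem any two skew ones are `y = 0` and `x = 0` in coordinates `(x, y)`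
of `k² × k²` for which `B (x, y) (x', y') = ∑ i, (x i ^ q * y' i + y i ^ q * x' i)`. The lines skew
to `x = 0` are then the graphs `y = M x` with `M j i ^ q = -M i j`, and two graphs are skew when
the difference of their matrices is invertible. Counting such matrices counts the ordered triples
of pairwise skew lines. Each triple has exactly `q + 1` transversals and lies in exactly one
quadric configuration, and a configuration of degree `d = q + 1` contains
`2 * d * (d - 1) * (d - 2)` triples.
-/

namespace ExtremalSurface

section FrobeniusPower

/-- `q` is a positive power of the characteristic of `k`. -/
class IsFrobeniusPower (k : Type*) [Field k] (q : ℕ) : Prop where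
  isPrimePow : IsPrimePow q
  cast_eq_zero : (q : k) = 0

namespace IsFrobeniusPower

theorem one_lt (k : Type*) [Field k] (q : ℕ) [IsFrobeniusPower k q] : 1 < q :=
  (isPrimePow k).one_lt

theorem ne_zero (k : Type*) [Field k] (q : ℕ) [IsFrobeniusPower k q] : q ≠ 0 :=
  (isPrimePow k).ne_zero

variable (k : Type*) [Field k] (q : ℕ) [IsFrobeniusPower k q]

instance sq : IsFrobeniusPower k (q ^ 2) where
  isPrimePow := (isPrimePow k).pow two_ne_zero
  cast_eq_zero := by rw [Nat.cast_pow, cast_eq_zero, zero_pow two_ne_zero]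

theorem add_pow (a b : k) : (a + b) ^ q = a ^ q + b ^ q := by
  obtain ⟨p, n, hp, hn, rfl⟩ := isPrimePow k (q := q)
  have hp' : p.Prime := Nat.prime_iff.mpr hp
  have hp0 : (p : k) ^ n = 0 := mod_cast cast_eq_zero (k := k) (q := p ^ n)
  have : Fact p.Prime := ⟨hp'⟩
  have : CharP k p := (CharP.charP_iff_prime_eq_zero hp').mpr ((pow_eq_zero_iff hn.ne').mp hp0)
  exact add_pow_char_pow a b p n

end IsFrobeniusPower

/-- The Frobenius endomorphism `x ↦ x ^ q`, along which Frobenius forms are semilinear. -/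
def frob (k : Type*) [Field k] (q : ℕ) [IsFrobeniusPower k q] : k →+* k where
  toFun x := x ^ q
  map_one' := one_pow q
  map_mul' x y := mul_pow x y q
  map_zero' := zero_pow (IsFrobeniusPower.ne_zero k q)
  map_add' := IsFrobeniusPower.add_pow k q

@[simp]
theorem frob_apply {k : Type*} [Field k] {q : ℕ} [IsFrobeniusPower k q] (x : k) :
    frob k q x = x ^ q := rfl

theorem IsFrobeniusPower.neg_pow {k : Type*} [Field k] {q : ℕ} [IsFrobeniusPower k q] (x : k) :
    (-x) ^ q = -x ^ q :=
  map_neg (frob k q) x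

instance {k : Type*} [Field k] [IsAlgClosed k] {q : ℕ} [IsFrobeniusPower k q] :
    RingHomSurjective (frob k q) where
  is_surjective x := IsAlgClosed.exists_pow_nat_eq x
    (Nat.pos_of_ne_zero (IsFrobeniusPower.ne_zero k q))

end FrobeniusPower

section Roots

open Polynomial

variable {k : Type*} [Field k] [IsAlgClosed k]

theorem ncard_setOf_isRoot {P : k[X]} (hP : P.Separable) :
    {z | P.IsRoot z}.ncard = P.natDegree := by
  classical
  have hroots : {z | P.IsRoot z} = (P.roots.toFinset : Set k) := by
    ext z; simp [hP.ne_zero]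
  rw [hroots, Set.ncard_coe_finset, Multiset.toFinset_card_of_nodup (nodup_roots hP),
    (IsAlgClosed.splits P).natDegree_eq_card_roots]

variable {q : ℕ} [IsFrobeniusPower k q]

theorem exists_pow_add_mul_add_eq_zero (b c : k) : ∃ t : k, t ^ q + b * t + c = 0 := by
  have hlt : (C b * X + C c : k[X]).degree < q :=
    degree_linear_le.trans_lt (mod_cast IsFrobeniusPower.one_lt k q)
  have hdeg : (X ^ q + (C b * X + C c) : k[X]).degree ≠ 0 := by
    rw [degree_add_eq_left_of_degree_lt (by rwa [degree_X_pow]), degree_X_pow]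
    exact_mod_cast IsFrobeniusPower.ne_zero k q
  obtain ⟨t, ht⟩ := IsAlgClosed.exists_root _ hdeg
  exact ⟨t, by simpa [IsRoot, add_assoc] using ht⟩

theorem ncard_setOf_pow_eq_mul {c : k} (hc : c ≠ 0) : {z : k | z ^ q = c * z}.ncard = q := by
  have hlt : (C c * X : k[X]).natDegree < (X ^ q : k[X]).natDegree := by
    rw [natDegree_C_mul_X _ hc, natDegree_X_pow]
    exact IsFrobeniusPower.one_lt k q
  have hsep : (X ^ q - C c * X : k[X]).Separable := by
    refine ⟨0, C (-c⁻¹), ?_⟩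
    simp [derivative_X_pow, IsFrobeniusPower.cast_eq_zero, ← C_mul, hc]
  simpa [sub_eq_zero, natDegree_sub_eq_left_of_natDegree_lt hlt] using ncard_setOf_isRoot hsep

theorem ncard_setOf_pow_succ_eq {c : k} (hc : c ≠ 0) : {z : k | z ^ (q + 1) = c}.ncard = q + 1 := by
  have hq : ((q + 1 : ℕ) : k) ≠ 0 := by simp [IsFrobeniusPower.cast_eq_zero]
  simpa [sub_eq_zero] using ncard_setOf_isRoot (separable_X_pow_sub_C c hq hc)

theorem ncard_setOf_pow_eq_neg : {z : k | z ^ q = -z}.ncard = q := by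
  simpa using ncard_setOf_pow_eq_mul (k := k) (q := q) (neg_ne_zero.mpr one_ne_zero)

theorem ncard_setOf_pow_eq_self : {z : k | z ^ q = z}.ncard = q := by
  simpa using ncard_setOf_pow_eq_mul (k := k) (q := q) one_ne_zero

open Classical in
theorem ncard_setOf_skewHermitian_eq_zero {a b d : k} (hdet : a * d + b ^ (q + 1) ≠ 0) :
    {t : k | a + b * t + t ^ q * (-b ^ q + d * t) = 0}.ncard = if d = 0 then q else q + 1 := by
  have hq := IsFrobeniusPower.one_lt k q
  set P : k[X] := C d * X ^ (q + 1) + (C (-b ^ q) * X ^ q + (C b * X + C a)) with hP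
  have hroots : {t : k | a + b * t + t ^ q * (-b ^ q + d * t) = 0} = {t | P.IsRoot t} := by
    ext t
    simp only [hP, IsRoot.def, Set.mem_ofPred_eq, eval_add, eval_mul, eval_C, eval_pow, eval_X]
    ring_nf
  have hderiv : derivative P = C d * X ^ q + C b := by
    simp [hP, derivative_pow, IsFrobeniusPower.cast_eq_zero]
  have hsep : P.Separable := by
    have hinv : C (a * d + b ^ (q + 1))⁻¹ * (C a * C d + C b ^ (q + 1)) = (1 : k[X]) := by
      rw [← C_mul, ← C_pow, ← C_add, ← C_mul, inv_mul_cancel₀ hdet, C_1]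
    refine ⟨C (a * d + b ^ (q + 1))⁻¹ * C d,
      C (a * d + b ^ (q + 1))⁻¹ * (C b ^ q - C d * X), ?_⟩
    rw [hderiv, ← hinv, hP]
    simp only [C_neg, C_pow]
    ring
  rw [hroots, ncard_setOf_isRoot hsep]
  split_ifs with hd
  · have hb : b ≠ 0 := by rintro rfl; simp [hd] at hdet
    have hbq : -b ^ q ≠ 0 := neg_ne_zero.mpr (pow_ne_zero _ hb)
    rw [hP, hd, C_0, zero_mul, zero_add, natDegree_add_eq_left_of_natDegree_lt,
      natDegree_C_mul_X_pow _ _ hbq]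
    rw [natDegree_C_mul_X_pow _ _ hbq]
    exact natDegree_linear_le.trans_lt hq
  · rw [hP, natDegree_add_eq_left_of_natDegree_lt, natDegree_C_mul_X_pow _ _ hd]
    rw [natDegree_C_mul_X_pow _ _ hd]
    refine (natDegree_add_le _ _).trans_lt (max_lt ?_ ?_)
    · exact (natDegree_C_mul_X_pow_le _ _).trans_lt q.lt_succ_self
    · exact natDegree_linear_le.trans_lt (by lia)

end Roots

section Lang

open Polynomial

variable {k : Type*} [Field k]

/-- The polynomials `P₀ = c₀ X ^ Q` and `Pᵢ₊₁ = Pᵢ ^ Q + cᵢ₊₁ X ^ Q`. If `φ` is `Q`-semilinear and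
`φ ^ (n + 1) v = ∑ cᵢ φ ^ i v`, then `∑ xᵢ φ ^ i v` is fixed by `φ` as soon as `xᵢ = Pᵢ (xₙ)`. -/
noncomputable def langPolynomial (Q : ℕ) (c : ℕ → k) : ℕ → k[X]
  | 0 => C (c 0) * X ^ Q
  | i + 1 => langPolynomial Q c i ^ Q + C (c (i + 1)) * X ^ Q

variable {Q : ℕ} {c : ℕ → k}

theorem X_sq_dvd_langPolynomial (hQ : 1 < Q) (i : ℕ) : X ^ 2 ∣ langPolynomial Q c i := by
  have hX (a : k) : X ^ 2 ∣ C a * X ^ Q := (pow_dvd_pow X hQ).mul_left _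
  induction i with
  | zero => exact hX _
  | succ i ih => exact dvd_add (dvd_pow ih (by lia)) (hX _)

theorem coeff_langPolynomial_pow (hQ : 1 < Q) (i : ℕ) : (langPolynomial Q c i ^ Q).coeff Q = 0 := by
  have hdvd : X ^ (Q + 1) ∣ langPolynomial Q c i ^ Q :=
    (pow_dvd_pow X (by lia)).trans
      ((pow_mul (X : k[X]) 2 Q).symm ▸ pow_dvd_pow_of_dvd (X_sq_dvd_langPolynomial hQ i) Q)
  exact X_pow_dvd_iff.mp hdvd Q Q.lt_succ_self

theorem coeff_langPolynomial (hQ : 1 < Q) (i : ℕ) : (langPolynomial Q c i).coeff Q = c i := by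
  cases i with
  | zero => simp [langPolynomial]
  | succ i => simp [langPolynomial, coeff_langPolynomial_pow hQ]

theorem eq_zero_of_langPolynomial_eq_zero (hQ : 1 < Q) {n : ℕ} (h : langPolynomial Q c n = 0) :
    ∀ i ≤ n, c i = 0 := by
  induction n with
  | zero =>
    intro i hi
    rw [Nat.le_zero.mp hi, ← coeff_langPolynomial (c := c) hQ, h, coeff_zero]
  | succ n ih =>
    have hc : c (n + 1) = 0 := by rw [← coeff_langPolynomial (c := c) hQ, h, coeff_zero]
    have hn : langPolynomial Q c n = 0 := by
      rw [langPolynomial, hc, C_0, zero_mul, add_zero] at h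
      exact eq_zero_of_pow_eq_zero h
    intro i hi
    rcases Nat.le_succ_iff.mp hi with hi | rfl
    exacts [ih hn i hi, hc]

theorem exists_eval_langPolynomial_eq_self [IsAlgClosed k] (hQ : 1 < Q) {n : ℕ}
    (h : ∃ i ≤ n, c i ≠ 0) : ∃ t ≠ 0, (langPolynomial Q c n).eval t = t := by
  obtain ⟨G, hG⟩ := X_sq_dvd_langPolynomial (c := c) hQ n
  have hG0 : G ≠ 0 := by
    rintro rfl
    obtain ⟨i, hi, hci⟩ := h
    exact hci (eq_zero_of_langPolynomial_eq_zero hQ (by rw [hG, mul_zero]) i hi)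
  have hpos : 0 < (X * G).degree := by
    rw [degree_mul, degree_X, degree_eq_natDegree hG0]
    exact_mod_cast Nat.lt_add_right _ one_pos
  obtain ⟨t, ht⟩ := IsAlgClosed.exists_root (X * G + C (-1)) (by
    rw [degree_add_C hpos]; exact hpos.ne')
  have htG : t * G.eval t = 1 := by simpa [add_neg_eq_zero] using ht
  refine ⟨t, left_ne_zero_of_mul_eq_one htG, ?_⟩
  rw [hG, eval_mul, eval_pow, eval_X]
  linear_combination t * htG

theorem exists_linearIndepOn_range_and_mem_span {V : Type*} [AddCommGroup V] [Module k V]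
    [FiniteDimensional k V] (f : ℕ → V) :
    ∃ n, LinearIndepOn k f (Finset.range n) ∧ f n ∈ Submodule.span k (f '' Finset.range n) := by
  classical
  have hex : ∃ n, ¬ LinearIndepOn k f (Finset.range n) := by
    refine ⟨finrank k V + 1, fun h => ?_⟩
    have hcard := h.fintype_card_le_finrank
    simp at hcard
  obtain ⟨n, hn⟩ : ∃ n, Nat.find hex = n + 1 := Nat.exists_eq_succ_of_ne_zero <| by
    simp [Nat.find_eq_zero]
  have hindep : LinearIndepOn k f (Finset.range n) := not_not.mp (Nat.find_min hex (by lia))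
  refine ⟨n, hindep, ?_⟩
  have hdep := Nat.find_spec hex
  rw [hn, Finset.range_add_one, Finset.coe_insert, linearIndepOn_insert_iff] at hdep
  by_contra hmem
  exact hdep ⟨hindep, fun h => absurd h hmem⟩

variable [IsFrobeniusPower k Q] {V : Type*} [AddCommGroup V] [Module k V] {φ : V →ₛₗ[frob k Q] V}

theorem le_comap_span_fixed :
    Submodule.span k {x | φ x = x} ≤ (Submodule.span k {x | φ x = x}).comap φ :=
  Submodule.span_le.mpr fun x hx => Submodule.subset_span <| by
    simp only [Set.mem_ofPred_eq] at hx ⊢; rw [hx, hx]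

variable [IsAlgClosed k]

theorem exists_map_sub_self_eq {w : V} (hw : w ∈ Submodule.span k {x | φ x = x}) :
    ∃ u ∈ Submodule.span k {x | φ x = x}, φ u - u = w := by
  induction hw using Submodule.closure_induction with
  | zero => exact ⟨0, zero_mem _, by simp⟩
  | add w w' _ _ ih ih' =>
    obtain ⟨u, hu, rfl⟩ := ih
    obtain ⟨u', hu', rfl⟩ := ih'
    exact ⟨u + u', add_mem hu hu', by rw [map_add]; abel⟩
  | smul_mem c x hx =>
    obtain ⟨t, ht⟩ := exists_pow_add_mul_add_eq_zero (q := Q) (-1) (-c)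
    refine ⟨t • x, Submodule.smul_mem _ t (Submodule.subset_span hx), ?_⟩
    rw [map_smulₛₗ, hx, frob_apply, ← sub_smul]
    congr 1
    linear_combination ht

variable [FiniteDimensional k V]

open Finset in
theorem exists_ne_zero_fixed [Nontrivial V] (hφ : Function.Injective φ) :
    ∃ w ≠ 0, φ w = w := by
  have hQ := IsFrobeniusPower.one_lt k Q
  obtain ⟨v, hv⟩ := exists_ne (0 : V)
  have hne (i : ℕ) : φ^[i] v ≠ 0 := fun h =>
    hv (hφ.iterate i (h.trans (iterate_map_zero φ i).symm))
  obtain ⟨n, hindep, hspan⟩ := exists_linearIndepOn_range_and_mem_span (k := k) fun i => φ^[i] v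
  obtain ⟨c, hc⟩ := (Submodule.mem_span_image_finset_iff_exists_fun' k).mp hspan
  obtain ⟨m, rfl⟩ : ∃ m, n = m + 1 := Nat.exists_eq_succ_of_ne_zero fun h0 => by
    subst h0; exact hv (by simpa using hc.symm)
  obtain ⟨t, ht0, ht⟩ : ∃ t ≠ 0, (langPolynomial Q c m).eval t = t := by
    refine exists_eval_langPolynomial_eq_self hQ ?_
    by_contra! hzero
    refine hne (m + 1) (hc ▸ sum_eq_zero fun i hi => ?_)
    rw [hzero i (mem_range_succ_iff.mp hi), zero_smul]
  set x : ℕ → k := fun i => (langPolynomial Q c i).eval t with hx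
  have hx0 : x 0 = c 0 * t ^ Q := by simp [hx, langPolynomial]
  have hxs (i : ℕ) : x (i + 1) = x i ^ Q + c (i + 1) * t ^ Q := by simp [hx, langPolynomial]
  refine ⟨∑ i ∈ range (m + 1), x i • φ^[i] v, fun h0 => ?_, ?_⟩
  · exact ht0 (ht ▸ linearIndepOn_finset_iff.mp hindep x h0 m (self_mem_range_succ m))
  · calc φ (∑ i ∈ range (m + 1), x i • φ^[i] v)
      _ = ∑ i ∈ range (m + 1), x i ^ Q • φ^[i + 1] v := by
          simp only [map_sum, map_smulₛₗ, frob_apply, Function.iterate_succ_apply']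
      _ = ∑ i ∈ range m, x i ^ Q • φ^[i + 1] v + t ^ Q • ∑ i ∈ range (m + 1), c i • φ^[i] v := by
          rw [sum_range_succ, show x m = t from ht, hc]
      _ = ∑ i ∈ range m, (x i ^ Q + c (i + 1) * t ^ Q) • φ^[i + 1] v + (c 0 * t ^ Q) • v := by
          simp only [sum_range_succ' _ m, smul_add, smul_sum, smul_smul, add_smul,
            mul_comm (t ^ Q), sum_add_distrib, add_assoc, Function.iterate_zero_apply]
      _ = ∑ i ∈ range (m + 1), x i • φ^[i] v := by
          simp only [sum_range_succ' _ m, ← hxs, ← hx0, Function.iterate_zero_apply]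

/-- Lang's theorem. With `U` the span of the fixed vectors, a nonzero fixed vector of `V ⧸ U` would
lift to a fixed vector of `V`, because `φ - 1` maps `U` onto itself. -/
theorem span_fixed_eq_top (hφ : Function.Injective φ) : Submodule.span k {x | φ x = x} = ⊤ := by
  set U := Submodule.span k {x | φ x = x}
  have hmap : U ≤ U.map φ := Submodule.span_le.mpr fun x hx =>
    ⟨x, Submodule.subset_span hx, hx⟩
  have hcomap : U.comap φ = U := by
    refine le_antisymm ?_ le_comap_span_fixed
    calc U.comap φ ≤ (U.map φ).comap φ := Submodule.comap_mono hmap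
      _ = U := Submodule.comap_map_eq_of_injective hφ U
  by_contra htop
  have : Nontrivial (V ⧸ U) := Submodule.Quotient.nontrivial_iff.mpr htop
  have hinj : Function.Injective (U.mapQ U φ hcomap.ge) := by
    rw [← LinearMap.ker_eq_bot, Submodule.ker_mapQ, hcomap, Submodule.mkQ_map_self]
  obtain ⟨x, hx0, hx⟩ := exists_ne_zero_fixed hinj
  obtain ⟨v, rfl⟩ := U.mkQ_surjective x
  have hsub : v - φ v ∈ U := by
    rw [← Submodule.Quotient.eq]; exact hx.symm
  obtain ⟨u, huU, hu⟩ := exists_map_sub_self_eq hsub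
  have hfixed : φ (v + u) = v + u := by
    rw [map_add, add_comm, sub_eq_sub_iff_add_eq_add.mp hu]
  have hvU : v ∈ U := by
    simpa using sub_mem (Submodule.subset_span hfixed : v + u ∈ U) huU
  exact hx0 ((Submodule.Quotient.mk_eq_zero U).mpr hvU)

theorem le_span_fixed {W : Submodule k V} (hφ : Function.Injective φ) (hW : W ≤ W.comap φ) :
    W ≤ Submodule.span k {x | x ∈ W ∧ φ x = x} := by
  let ψ : W →ₛₗ[frob k Q] W := (φ.domRestrict W).codRestrict W fun x => hW x.2
  have hψ : Function.Injective ψ := fun x y h => Subtype.ext (hφ (congrArg Subtype.val h))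
  have htop := congrArg (Submodule.map W.subtype) (span_fixed_eq_top hψ)
  rw [Submodule.map_span, Submodule.map_subtype_top] at htop
  refine htop.ge.trans (Submodule.span_mono ?_)
  rintro _ ⟨x, hx, rfl⟩
  exact ⟨x.2, congrArg Subtype.val hx⟩

end Lang

section FrobeniusForm

variable {k : Type*} [Field k] {q : ℕ} [IsFrobeniusPower k q]
  {V : Type*} [AddCommGroup V] [Module k V]

/-- A Frobenius form in coordinate-free shape: `B x y` is `q`-semilinear in `x` and linear in `y`,
and the homogeneous form of degree `q + 1` is `B x x`. -/
abbrev FrobeniusForm (k : Type*) [Field k] (q : ℕ) [IsFrobeniusPower k q]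
    (V : Type*) [AddCommGroup V] [Module k V] :=
  V →ₛₗ[frob k q] V →ₗ[k] k

/-- The vectors `e` on which the form looks Hermitian, `B y e = B e y ^ q` for all `y`. They play
the role of the rational points over the field with `q ^ 2` elements. -/
def IsHermitianVec (B : FrobeniusForm k q V) (e : V) : Prop :=
  ∀ y, B y e = B e y ^ q

theorem apply_smul_left (B : FrobeniusForm k q V) (c : k) (x y : V) :
    B (c • x) y = c ^ q * B x y := by
  rw [LinearMap.map_smulₛₗ, LinearMap.smul_apply, frob_apply, smul_eq_mul]

theorem IsHermitianVec.add {B : FrobeniusForm k q V} {e f : V} (he : IsHermitianVec B e)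
    (hf : IsHermitianVec B f) : IsHermitianVec B (e + f) := fun y => by
  rw [map_add, he y, hf y, map_add, LinearMap.add_apply, IsFrobeniusPower.add_pow]

theorem IsHermitianVec.smul {B : FrobeniusForm k q V} {e : V} (he : IsHermitianVec B e) {c : k}
    (hc : c ^ q ^ 2 = c) : IsHermitianVec B (c • e) := fun y => by
  rw [map_smul, he y, apply_smul_left, smul_eq_mul, mul_pow, ← pow_mul, ← sq, hc]

theorem injective_of_separatingLeft {B : FrobeniusForm k q V} (hB : B.SeparatingLeft) :
    Function.Injective B :=
  LinearMap.ker_eq_bot.mp (LinearMap.separatingLeft_iff_ker_eq_bot.mp hB)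

theorem nondegenerate_domRestrict₁₂_ker {B : FrobeniusForm k q V} (hB : B.Nondegenerate) {v : V}
    (hv : IsHermitianVec B v) (hvv : B v v = 1) :
    (B.domRestrict₁₂ (B v).ker (B v).ker).Nondegenerate := by
  have hdecomp (y : V) : y - B v y • v ∈ (B v).ker := by
    rw [LinearMap.mem_ker, map_sub, map_smul, hvv, smul_eq_mul, mul_one, sub_self]
  have hright (w : (B v).ker) : B w v = 0 := by
    rw [hv w, LinearMap.mem_ker.mp w.2, zero_pow (IsFrobeniusPower.ne_zero k q)]
  refine ⟨fun w hw => Subtype.ext (hB.1 w fun y => ?_),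
    fun w hw => Subtype.ext (hB.2 w fun y => ?_)⟩
  · have hwy : B w (y - B v y • v) = 0 := hw ⟨_, hdecomp y⟩
    rwa [map_sub, map_smul, hright, smul_zero, sub_zero] at hwy
  · have hyw : B (y - B v y • v) w = 0 := hw ⟨_, hdecomp y⟩
    rwa [map_sub, LinearMap.sub_apply, apply_smul_left, LinearMap.mem_ker.mp w.2, mul_zero,
      sub_zero] at hyw

variable [IsAlgClosed k]

theorem finrank_map_of_injective {M : Type*} [AddCommGroup M] [Module k M]
    {φ : V →ₛₗ[frob k q] M} (hφ : Function.Injective φ) (W : Submodule k V) :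
    finrank k (W.map φ) = finrank k W := by
  let e : W ≃+ W.map φ := AddEquiv.ofBijective (φ.submoduleMap W).toAddMonoidHom
    ⟨fun x y h => Subtype.ext (hφ (congrArg Subtype.val h)), φ.submoduleMap_surjective W⟩
  have hrank := lift_rank_eq_of_equiv_equiv (frob k q) e ⟨(frob k q).injective,
    RingHomSurjective.is_surjective⟩ fun c x => map_smulₛₗ (φ.submoduleMap W) c x
  simpa [finrank] using (congrArg Cardinal.toNat hrank).symm

theorem IsHermitianVec.exists_smul_apply_self_eq_one {B : FrobeniusForm k q V} {x : V}
    (hx : IsHermitianVec B x) (hx0 : B x x ≠ 0) :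
    ∃ c : k, IsHermitianVec B (c • x) ∧ B (c • x) (c • x) = 1 := by
  obtain ⟨c, hc⟩ := IsAlgClosed.exists_pow_nat_eq (B x x)⁻¹ q.succ_pos
  have hc0 : c ≠ 0 := by
    rintro rfl
    exact inv_ne_zero hx0 (by rw [← hc, zero_pow q.succ_ne_zero])
  have hcq : c ^ q ^ 2 = c := mul_right_cancel₀ (pow_ne_zero q hc0) <|
    calc c ^ q ^ 2 * c ^ q = (c ^ q.succ) ^ q := by rw [← pow_add, ← pow_mul]; congr 1; lia
      _ = c ^ q.succ := by rw [hc, inv_pow, ← hx x]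
      _ = c * c ^ q := pow_succ' c q
  refine ⟨c, hx.smul hcq, ?_⟩
  rw [apply_smul_left, map_smul, smul_eq_mul, ← mul_assoc, ← pow_succ, hc, inv_mul_cancel₀ hx0]

theorem IsHermitianVec.exists_add_smul_apply_self_eq_one {B : FrobeniusForm k q V} {x y : V}
    (hx : IsHermitianVec B x) (hy : IsHermitianVec B y) (hxx : B x x = 0) (hyy : B y y = 0)
    (hxy : B x y ≠ 0) :
    ∃ t : k, IsHermitianVec B (x + t • y) ∧ B (x + t • y) (x + t • y) = 1 := by
  obtain ⟨s, hs⟩ := exists_pow_add_mul_add_eq_zero (q := q) (1 : k) (-1)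
  have hsq : s ^ q = 1 - s := by linear_combination hs
  have hs2 : s ^ q ^ 2 = s := by
    rw [sq, pow_mul, hsq, ← frob_apply, map_sub, map_one, frob_apply, hsq, sub_sub_cancel]
  have hxy2 : B x y ^ q ^ 2 = B x y := by rw [sq, pow_mul, ← hx y, ← hy x]
  refine ⟨s / B x y, hx.add (hy.smul (by rw [div_pow, hs2, hxy2])), ?_⟩
  have hyx : B y x = B x y ^ q := hx y
  simp only [map_add, LinearMap.add_apply, map_smul, apply_smul_left, smul_eq_mul, hxx, hyy, hyx,
    div_pow, div_mul_cancel₀ _ (pow_ne_zero q hxy)]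
  linear_combination hs + s * mul_inv_cancel₀ hxy

variable [FiniteDimensional k V] {B : FrobeniusForm k q V}

theorem surjective_of_separatingLeft (hB : B.SeparatingLeft) : Function.Surjective B := by
  rw [← LinearMap.range_eq_top, ← Submodule.map_top]
  refine Submodule.eq_top_of_finrank_eq ?_
  rw [finrank_map_of_injective (injective_of_separatingLeft hB), finrank_top,
    Subspace.dual_finrank_eq]

theorem finrank_add_finrank_orthogonalBilin (hB : B.SeparatingLeft) (W : Submodule k V) :
    finrank k W + finrank k (W.orthogonalBilin B) = finrank k V := by
  have hcoann : W.orthogonalBilin B = (W.map B).dualCoannihilator := by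
    ext y
    simp [Submodule.mem_dualCoannihilator, Submodule.mem_orthogonalBilin_iff]
  rw [hcoann, ← finrank_map_of_injective (injective_of_separatingLeft hB) W,
    Subspace.finrank_add_finrank_dualCoannihilator_eq]

/-- The map `φ` has the Hermitian vectors as its fixed vectors. -/
theorem exists_twist (hB : B.Nondegenerate) :
    ∃ φ : V →ₛₗ[frob k (q ^ 2)] V, Function.Injective φ ∧ ∀ x y, B y (φ x) = B x y ^ q := by
  let b := finBasis k V
  choose d hd using fun i => surjective_of_separatingLeft hB.1 (b.coord i)
  let φ : V →ₛₗ[frob k (q ^ 2)] V :=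
    { toFun x := ∑ i, B x (d i) ^ q • b i
      map_add' x y := by
        simp only [map_add, LinearMap.add_apply, IsFrobeniusPower.add_pow, add_smul,
          Finset.sum_add_distrib]
      map_smul' c x := by
        simp only [LinearMap.map_smulₛₗ, LinearMap.smul_apply, frob_apply, smul_eq_mul, mul_pow,
          ← pow_mul, ← sq, mul_smul, Finset.smul_sum] }
  have hφ (x y : V) : B y (φ x) = B x y ^ q := by
    choose r hr using fun i => RingHomSurjective.is_surjective (σ := frob k q) (B y (b i))
    have hy : y = ∑ i, r i • d i := injective_of_separatingLeft hB.1 <| b.ext fun j => by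
      rw [map_sum]; simp only [LinearMap.map_smulₛₗ, hd, hr]; simp
    calc B y (φ x) = ∑ i, B x (d i) ^ q * B y (b i) := by simp [φ]
      _ = frob k q (∑ i, r i * B x (d i)) := by
          simp only [map_sum, map_mul, hr, frob_apply, mul_comm]
      _ = B x y ^ q := by
          rw [frob_apply, hy, map_sum]; simp only [map_smul, smul_eq_mul]
  refine ⟨φ, (injective_iff_map_eq_zero φ).mpr fun x hx => hB.1 x fun y => ?_, hφ⟩
  rw [← pow_eq_zero_iff (IsFrobeniusPower.ne_zero k q), ← hφ, hx, map_zero]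

theorem span_isHermitianVec_eq_top (hB : B.Nondegenerate) :
    Submodule.span k {e | IsHermitianVec B e} = ⊤ := by
  obtain ⟨φ, hinj, hφ⟩ := exists_twist hB
  refine top_le_iff.mp ((span_fixed_eq_top hinj).ge.trans (Submodule.span_mono fun e he y => ?_))
  rw [← hφ, show φ e = e from he]

theorem le_span_isHermitianVec (hB : B.Nondegenerate) {L : Submodule k V}
    (hL : L.orthogonalBilin B = L) : L ≤ Submodule.span k {e | e ∈ L ∧ IsHermitianVec B e} := by
  obtain ⟨φ, hinj, hφ⟩ := exists_twist hB
  have hstable : L ≤ L.comap φ := fun x hx => by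
    rw [← hL, Submodule.mem_comap, Submodule.mem_orthogonalBilin_iff]
    intro y hy
    rw [← hL, Submodule.mem_orthogonalBilin_iff] at hy
    rw [hφ, hy x hx, zero_pow (IsFrobeniusPower.ne_zero k q)]
  refine (le_span_fixed hinj hstable).trans (Submodule.span_mono fun e he => ⟨he.1, fun y => ?_⟩)
  rw [← hφ, he.2]

theorem exists_isHermitianVec_apply_self_eq_one [Nontrivial V] (hB : B.Nondegenerate) :
    ∃ v, IsHermitianVec B v ∧ B v v = 1 := by
  by_cases hself : ∃ x, IsHermitianVec B x ∧ B x x ≠ 0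
  · obtain ⟨x, hx, hx0⟩ := hself
    obtain ⟨c, hc⟩ := hx.exists_smul_apply_self_eq_one hx0
    exact ⟨_, hc⟩
  push Not at hself
  have hspan := span_isHermitianVec_eq_top hB
  obtain ⟨x, hx, y, hy, hxy⟩ : ∃ x, IsHermitianVec B x ∧ ∃ y, IsHermitianVec B y ∧ B x y ≠ 0 := by
    by_contra! hzero
    obtain ⟨v, hv⟩ := exists_ne (0 : V)
    have hBx (x : V) (hx : IsHermitianVec B x) : B x = 0 :=
      LinearMap.ext_on hspan fun y hy => hzero x hx y hy
    have hB0 : B = 0 := LinearMap.ext_on hspan hBx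
    exact hv (hB.1 v fun y => by rw [hB0]; rfl)
  obtain ⟨t, ht⟩ := hx.exists_add_smul_apply_self_eq_one hy (hself x hx) (hself y hy) hxy
  exact ⟨_, ht⟩

theorem exists_orthonormal_basis (hB : B.Nondegenerate) {n : ℕ} (hn : finrank k V = n) :
    ∃ b : Basis (Fin n) k V, ∀ i j, B (b i) (b j) = if i = j then 1 else 0 := by
  induction n generalizing V with
  | zero =>
    have := finrank_zero_iff.mp hn
    exact ⟨Basis.empty V, fun i => i.elim0⟩
  | succ n ih =>
    have : Nontrivial V := nontrivial_of_finrank_eq_succ hn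
    obtain ⟨v, hv, hvv⟩ := exists_isHermitianVec_apply_self_eq_one hB
    have hv0 : B v ≠ 0 := fun h => by simp [h] at hvv
    have hker : finrank k (B v).ker = n := by
      have := Module.Dual.finrank_ker_add_one_of_ne_zero hv0
      lia
    obtain ⟨b, hb⟩ := ih (nondegenerate_domRestrict₁₂_ker hB hv hvv) hker
    let f : Fin (n + 1) → V := Fin.cons v fun i => b i
    have hf (i j : Fin (n + 1)) : B (f i) (f j) = if i = j then 1 else 0 := by
      induction i using Fin.cases with
      | zero =>
        induction j using Fin.cases with
        | zero => simp [f, hvv]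
        | succ j => simp [f, (Fin.succ_ne_zero j).symm]
      | succ i =>
        induction j using Fin.cases with
        | zero => simp [f, hv (b i), LinearMap.mem_ker.mp (b i).2, IsFrobeniusPower.ne_zero k q]
        | succ j => simpa [f, LinearMap.domRestrict₁₂_apply] using hb i j
    have hli : LinearIndependent k f := LinearMap.linearIndependent_of_isOrthoᵢ (B := B)
      (fun i j hij => (hf i j).trans (if_neg hij)) (fun i => by simp [hf])
    exact ⟨basisOfLinearIndependentOfCardEqFinrank hli (by simp [hn]), by simpa using hf⟩

end FrobeniusForm

section IsotropicLine

variable {k : Type*} [Field k] {q : ℕ} [IsFrobeniusPower k q]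
  {V : Type*} [AddCommGroup V] [Module k V]

/-- A line of the projective space of `V` on which `B` vanishes identically. By
`isIsotropicLine_iff` these are the lines on the hypersurface `B x x = 0`. -/
def IsIsotropicLine (B : FrobeniusForm k q V) (L : Submodule k V) : Prop :=
  finrank k L = 2 ∧ ∀ x ∈ L, ∀ y ∈ L, B x y = 0

theorem isIsotropicLine_span_pair {B : FrobeniusForm k q V} {u w : V}
    (hli : LinearIndependent k ![u, w]) (huu : B u u = 0) (huw : B u w = 0) (hwu : B w u = 0)
    (hww : B w w = 0) : IsIsotropicLine B (Submodule.span k {u, w}) := by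
  have hfinrank := finrank_span_eq_card hli
  rw [Matrix.range_cons_cons_empty, Fintype.card_fin] at hfinrank
  refine ⟨hfinrank, fun x hx y hy => ?_⟩
  obtain ⟨a, b, rfl⟩ := Submodule.mem_span_pair.mp hx
  obtain ⟨c, d, rfl⟩ := Submodule.mem_span_pair.mp hy
  simp [huu, huw, hwu, hww]

theorem IsIsotropicLine.ne_bot {B : FrobeniusForm k q V} {L : Submodule k V}
    (hL : IsIsotropicLine B L) : L ≠ ⊥ := by
  rintro rfl
  simpa using hL.1

variable [IsAlgClosed k]

theorem isIsotropicLine_iff {B : FrobeniusForm k q V} {L : Submodule k V} :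
    IsIsotropicLine B L ↔ finrank k L = 2 ∧ ∀ x ∈ L, B x x = 0 := by
  refine ⟨fun h => ⟨h.1, fun x hx => h.2 x hx x hx⟩, fun h => ⟨h.1, fun x hx y hy => ?_⟩⟩
  obtain ⟨t, ht⟩ := exists_pow_add_mul_add_eq_zero (q := q) (-1 : k) 1
  have h1 := h.2 _ (L.add_mem hx hy)
  have ht' := h.2 _ (L.add_mem hx (L.smul_mem t hy))
  simp only [map_add, map_smul, LinearMap.add_apply, apply_smul_left, smul_eq_mul, h.2 x hx,
    h.2 y hy] at h1 ht'
  linear_combination ht' - t ^ q * h1 + ht * B x y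

variable [FiniteDimensional k V] {B : FrobeniusForm k q V}

theorem IsIsotropicLine.orthogonalBilin_eq (hB : B.SeparatingLeft) (hV : finrank k V = 4)
    {L : Submodule k V} (hL : IsIsotropicLine B L) : L.orthogonalBilin B = L := by
  have hdim := finrank_add_finrank_orthogonalBilin hB L
  have hle : L ≤ L.orthogonalBilin B := fun y hy =>
    Submodule.mem_orthogonalBilin_iff.mpr fun x hx => hL.2 x hx y hy
  have hL2 := hL.1
  exact (Submodule.eq_of_le_of_finrank_eq hle (by lia)).symm

theorem exists_disjoint_isIsotropicLine (hB : B.Nondegenerate) (hV : finrank k V = 4) :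
    ∃ L L', IsIsotropicLine B L ∧ IsIsotropicLine B L' ∧ Disjoint L L' := by
  obtain ⟨b, hb⟩ := exists_orthonormal_basis hB hV
  have hline (t : k) (ht : t ^ (q + 1) = -1) :
      IsIsotropicLine B (Submodule.span k {b 0 + t • b 1, b 2 + t • b 3}) := by
    refine isIsotropicLine_span_pair (LinearIndependent.pair_iff.mpr fun c d hcd => ?_) ?_ ?_ ?_ ?_
    · exact ⟨by simpa using congrArg (b.repr · 0) hcd, by simpa using congrArg (b.repr · 2) hcd⟩
    all_goals simp [hb, ← pow_succ, ht]
  obtain ⟨s, hs, t, ht, hst⟩ : {z : k | z ^ (q + 1) = -1}.Nontrivial := by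
    refine (Set.one_lt_ncard_iff_nontrivial_and_finite.mp ?_).1
    rw [ncard_setOf_pow_succ_eq (neg_ne_zero.mpr one_ne_zero)]
    exact Nat.succ_lt_succ (Nat.pos_of_ne_zero (IsFrobeniusPower.ne_zero k q))
  refine ⟨_, _, hline s hs, hline t ht, Submodule.disjoint_def.mpr fun x hxs hxt => ?_⟩
  have hcoord {t : k} (hx : x ∈ Submodule.span k {b 0 + t • b 1, b 2 + t • b 3}) :
      b.repr x 1 = t * b.repr x 0 ∧ b.repr x 3 = t * b.repr x 2 := by
    obtain ⟨c, d, rfl⟩ := Submodule.mem_span_pair.mp hx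
    simp [mul_comm]
  obtain ⟨hs1, hs3⟩ := hcoord hxs
  obtain ⟨ht1, ht3⟩ := hcoord hxt
  have h0 : b.repr x 0 = 0 :=
    (mul_eq_mul_right_iff.mp (hs1.symm.trans ht1)).resolve_left hst
  have h2 : b.repr x 2 = 0 :=
    (mul_eq_mul_right_iff.mp (hs3.symm.trans ht3)).resolve_left hst
  refine b.ext_elem fun i => ?_
  fin_cases i <;> simp [h0, h2, hs1, hs3]

end IsotropicLine

section HyperbolicFrame

variable {k : Type*} [Field k] {q : ℕ}

/-- The vector of `k²` representing a point of the projective line over `k`; `none` is the point at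
infinity. -/
def direction : Option k → Fin 2 → k
  | none => ![0, 1]
  | some t => ![1, t]

/-- A vector spanning the solutions `y` of `∑ i, direction t i ^ q * y i = 0`. -/
def codirection (q : ℕ) : Option k → Fin 2 → k
  | none => ![1, 0]
  | some t => ![-t ^ q, 1]

theorem direction_ne_zero (t : Option k) : direction t ≠ 0 := by
  cases t <;> simp [direction]

theorem codirection_ne_zero (q : ℕ) (t : Option k) : codirection q t ≠ 0 := by
  cases t <;> simp [codirection]

theorem exists_eq_smul_direction (x : Fin 2 → k) : ∃ (t : _) (c : k), x = c • direction t := by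
  by_cases hx : x 0 = 0
  · exact ⟨none, x 1, by ext i; fin_cases i <;> simp [direction, hx]⟩
  · exact ⟨some (x 1 / x 0), x 0, by ext i; fin_cases i <;> simp [direction, mul_div_cancel₀, hx]⟩

theorem eq_zero_of_smul_direction_eq {s t : Option k} (hst : s ≠ t) {c d : k}
    (h : c • direction s = d • direction t) : c = 0 := by
  have h0 := congrFun h 0
  have h1 := congrFun h 1
  simp only [Pi.smul_apply, smul_eq_mul] at h0 h1
  cases s <;> cases t <;>
    simp only [direction, Matrix.cons_val_zero, Matrix.cons_val_one] at h0 h1 <;> grind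

variable [IsFrobeniusPower k q]

theorem sum_direction_pow_mul_eq_zero_iff {t : Option k} {y : Fin 2 → k} :
    ∑ i, direction t i ^ q * y i = 0 ↔ ∃ c : k, y = c • codirection q t := by
  have hq := IsFrobeniusPower.ne_zero k q
  rw [Fin.sum_univ_two]
  cases t with
  | none =>
    suffices y 1 = 0 ↔ ∃ c : k, y = ![c, 0] by simpa [direction, codirection, hq]
    exact ⟨fun h => ⟨y 0, by ext i; fin_cases i <;> simp [h]⟩, fun ⟨c, hc⟩ => by simp [hc]⟩
  | some s =>
    suffices y 0 + s ^ q * y 1 = 0 ↔ ∃ c : k, y = ![c * -s ^ q, c] by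
      simpa [direction, codirection]
    refine ⟨fun h => ⟨y 1, ?_⟩, fun ⟨c, hc⟩ => by simp [hc, mul_comm]⟩
    ext i
    fin_cases i
    · exact (eq_neg_of_add_eq_zero_left h).trans (by simp [mul_comm])
    · rfl

theorem eq_zero_of_smul_codirection_eq {s t : Option k} (hst : s ≠ t) {c d : k}
    (h : c • codirection q s = d • codirection q t) : c = 0 := by
  have hinj (a b : k) : a ^ q = b ^ q → a = b := fun hab => (frob k q).injective hab
  have h0 := congrFun h 0
  have h1 := congrFun h 1
  simp only [Pi.smul_apply, smul_eq_mul] at h0 h1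
  cases s <;> cases t <;>
    simp only [codirection, Matrix.cons_val_zero, Matrix.cons_val_one] at h0 h1 <;> grind

variable {V : Type*} [AddCommGroup V] [Module k V]

/-- Coordinates `(x, y)` on `V` in which the Frobenius form is
`∑ i, (x_i ^ q * y_i + y_i ^ q * x_i)`, so that `x = 0` and `y = 0` are disjoint isotropic lines. -/
structure HyperbolicFrame (B : FrobeniusForm k q V) where
  coord : V ≃ₗ[k] (Fin 2 → k) × (Fin 2 → k)
  apply_eq (u v : V) : B u v =
    ∑ i, ((coord u).1 i ^ q * (coord v).2 i + (coord u).2 i ^ q * (coord v).1 i)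

namespace HyperbolicFrame

variable {B : FrobeniusForm k q V} (F : HyperbolicFrame B)

/-- The line `y = M x`. -/
def graph (M : Matrix (Fin 2) (Fin 2) k) : Submodule k V :=
  M.toLin'.graph.map F.coord.symm.toLinearMap

/-- The line `x = 0`, the one line missing from the family of graphs. -/
def infinity : Submodule k V :=
  (LinearMap.inr k (Fin 2 → k) (Fin 2 → k)).range.map F.coord.symm.toLinearMap

/-- The lines meeting both `F.graph 0` and `F.infinity` on which `B` has a chance to vanish. -/
def transversal (t : Option k) : Submodule k V :=
  Submodule.span k {F.coord.symm (direction t, 0), F.coord.symm (0, codirection q t)}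

theorem mem_graph {M : Matrix (Fin 2) (Fin 2) k} {v : V} :
    v ∈ F.graph M ↔ (F.coord v).2 = M.mulVec (F.coord v).1 := by
  simp [graph, Submodule.mem_map_equiv]

theorem mem_infinity {v : V} : v ∈ F.infinity ↔ (F.coord v).1 = 0 := by
  simp [infinity, Submodule.mem_map_equiv, LinearMap.range_inr]

theorem mem_transversal {t : Option k} {v : V} : v ∈ F.transversal t ↔
    (∃ c : k, (F.coord v).1 = c • direction t) ∧ ∃ d : k, (F.coord v).2 = d • codirection q t := by
  simp [transversal, Submodule.mem_span_pair, ← map_smul, ← map_add, LinearEquiv.symm_apply_eq,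
    Prod.ext_iff, eq_comm (b := (F.coord v).1), eq_comm (b := (F.coord v).2)]

theorem finrank_graph (M : Matrix (Fin 2) (Fin 2) k) : finrank k (F.graph M) = 2 := by
  rw [graph, LinearEquiv.finrank_map_eq, LinearMap.graph_eq_range_prod,
    LinearMap.finrank_range_of_inj fun x y h => congrArg Prod.fst h, Module.finrank_fin_fun]

theorem finrank_infinity : finrank k F.infinity = 2 := by
  rw [infinity, LinearEquiv.finrank_map_eq, LinearMap.finrank_range_of_inj LinearMap.inr_injective,
    Module.finrank_fin_fun]

theorem linearIndependent_transversal (t : Option k) :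
    LinearIndependent k ![F.coord.symm (direction t, 0), F.coord.symm (0, codirection q t)] := by
  simp [LinearIndependent.pair_iff, ← map_smul, ← map_add, direction_ne_zero, codirection_ne_zero]

theorem graph_injective : Function.Injective F.graph := by
  intro M N h
  refine Matrix.toLin'.injective (LinearMap.ext fun x => ?_)
  have hx : F.coord.symm (x, M.mulVec x) ∈ F.graph N := h ▸ F.mem_graph.mpr (by simp)
  simpa using F.mem_graph.mp hx

theorem disjoint_graph_infinity (M : Matrix (Fin 2) (Fin 2) k) :
    Disjoint (F.graph M) F.infinity := by
  refine Submodule.disjoint_def.mpr fun v hM hinf => F.coord.map_eq_zero_iff.mp ?_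
  rw [mem_infinity] at hinf
  rw [mem_graph, hinf, Matrix.mulVec_zero] at hM
  exact Prod.ext hinf hM

theorem disjoint_graph_iff {M N : Matrix (Fin 2) (Fin 2) k} :
    Disjoint (F.graph M) (F.graph N) ↔ (M - N).det ≠ 0 := by
  rw [← not_iff_not, not_not, ← Matrix.exists_mulVec_eq_zero_iff, Submodule.disjoint_def]
  push Not
  constructor
  · rintro ⟨v, hM, hN, hv⟩
    rw [mem_graph] at hM hN
    refine ⟨(F.coord v).1, fun hx => hv ?_, by rw [Matrix.sub_mulVec, ← hM, ← hN, sub_self]⟩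
    exact F.coord.map_eq_zero_iff.mp (Prod.ext hx (by rw [hM, hx, Matrix.mulVec_zero]; rfl))
  · rintro ⟨x, hx, hMN⟩
    rw [Matrix.sub_mulVec, sub_eq_zero] at hMN
    exact ⟨F.coord.symm (x, M.mulVec x), F.mem_graph.mpr (by simp), F.mem_graph.mpr (by simp [hMN]),
      by simp [hx]⟩

theorem finrank_transversal (t : Option k) : finrank k (F.transversal t) = 2 := by
  have hfinrank := finrank_span_eq_card (F.linearIndependent_transversal t)
  rwa [Matrix.range_cons_cons_empty, Fintype.card_fin] at hfinrank

theorem not_disjoint_transversal_infinity (t : Option k) :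
    ¬Disjoint (F.transversal t) F.infinity := fun h => by
  have := Submodule.disjoint_def.mp h (F.coord.symm (0, codirection q t))
    (Submodule.subset_span (by simp)) (F.mem_infinity.mpr (by simp))
  simp [codirection_ne_zero] at this

theorem not_disjoint_transversal_graph_iff {t : Option k} {M : Matrix (Fin 2) (Fin 2) k} :
    ¬Disjoint (F.transversal t) (F.graph M) ↔
      ∑ i, direction t i ^ q * M.mulVec (direction t) i = 0 := by
  rw [sum_direction_pow_mul_eq_zero_iff, Submodule.disjoint_def]
  push Not
  constructor
  · rintro ⟨v, ht, hM, hv⟩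
    rw [mem_transversal] at ht
    obtain ⟨⟨c, hc⟩, d, hd⟩ := ht
    rw [mem_graph] at hM
    have hc0 : c ≠ 0 := by
      rintro rfl
      rw [zero_smul] at hc
      rw [hc, Matrix.mulVec_zero] at hM
      exact hv (F.coord.map_eq_zero_iff.mp (Prod.ext hc hM))
    refine ⟨c⁻¹ * d, ?_⟩
    rw [mul_smul, ← hd, hM, hc, Matrix.mulVec_smul, inv_smul_smul₀ hc0]
  · rintro ⟨d, hd⟩
    exact ⟨F.coord.symm (direction t, d • codirection q t),
      F.mem_transversal.mpr ⟨⟨1, by simp⟩, d, by simp⟩, F.mem_graph.mpr (by simp [hd]),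
      by simp [direction_ne_zero]⟩

theorem disjoint_transversal {s t : Option k} (hst : s ≠ t) :
    Disjoint (F.transversal s) (F.transversal t) := by
  refine Submodule.disjoint_def.mpr fun v hs ht => F.coord.map_eq_zero_iff.mp ?_
  rw [mem_transversal] at hs ht
  obtain ⟨⟨c, hc⟩, d, hd⟩ := hs
  obtain ⟨⟨c', hc'⟩, d', hd'⟩ := ht
  refine Prod.ext ?_ ?_
  · rw [hc, eq_zero_of_smul_direction_eq hst (hc.symm.trans hc'), zero_smul]; rfl
  · rw [hd, eq_zero_of_smul_codirection_eq hst (hd.symm.trans hd'), zero_smul]; rfl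

theorem transversal_injective : Function.Injective F.transversal := by
  intro s t h
  by_contra hst
  have hdisj := F.disjoint_transversal hst
  rw [h, disjoint_self] at hdisj
  simpa [hdisj] using F.not_disjoint_transversal_infinity t

/-- The matrices `M` for which the line `y = M x` is isotropic. -/
def skewHermitian (k : Type*) [Field k] (q : ℕ) : Set (Matrix (Fin 2) (Fin 2) k) :=
  {M | ∀ i j, M j i ^ q = -M i j}

/-- The points of the projective line defined over the field with `q ^ 2` elements. -/
def rationalPoints (k : Type*) [Field k] (q : ℕ) : Set (Option k) :=
  insert none (some '' {t | t ^ q ^ 2 = t})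

theorem isIsotropicLine_graph_iff {M : Matrix (Fin 2) (Fin 2) k} :
    IsIsotropicLine B (F.graph M) ↔ M ∈ skewHermitian k q := by
  have happly {u v : V} (hu : u ∈ F.graph M) (hv : v ∈ F.graph M) : B u v =
      ∑ i, ∑ j, (F.coord u).1 i ^ q * (M i j + M j i ^ q) * (F.coord v).1 j := by
    rw [mem_graph] at hu hv
    simp only [F.apply_eq, hu, hv, Matrix.mulVec, dotProduct, Fin.sum_univ_two,
      IsFrobeniusPower.add_pow, mul_pow]
    ring
  refine ⟨fun h i j => ?_, fun h => ⟨F.finrank_graph M, fun u hu v hv => ?_⟩⟩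
  · have hmem (i : Fin 2) : F.coord.symm (Pi.single i 1, M.mulVec (Pi.single i 1)) ∈ F.graph M :=
      F.mem_graph.mpr (by simp)
    have hij := (happly (hmem i) (hmem j)).symm.trans (h.2 _ (hmem i) _ (hmem j))
    have hq := IsFrobeniusPower.ne_zero k q
    fin_cases i <;> fin_cases j <;> simpa [hq, add_eq_zero_iff_eq_neg'] using hij
  · rw [happly hu hv]
    simp [h _ _]

theorem isIsotropicLine_infinity : IsIsotropicLine B F.infinity := by
  refine ⟨F.finrank_infinity, fun u hu v hv => ?_⟩
  rw [mem_infinity] at hu hv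
  simp [F.apply_eq, hu, hv, IsFrobeniusPower.ne_zero k q]

theorem isIsotropicLine_transversal_iff {t : Option k} :
    IsIsotropicLine B (F.transversal t) ↔ t ∈ rationalPoints k q := by
  have hq := IsFrobeniusPower.ne_zero k q
  have hsum : ∑ i, codirection q t i ^ q * direction t i = 0 ↔ t ∈ rationalPoints k q := by
    cases t with
    | none => simp [codirection, direction, rationalPoints, hq]
    | some t =>
      simp [codirection, direction, rationalPoints, IsFrobeniusPower.neg_pow, ← pow_mul, ← sq,
        neg_add_eq_zero]
  rw [← hsum]
  constructor
  · intro h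
    simpa [F.apply_eq, hq] using h.2 _ (Submodule.subset_span (Set.mem_insert_of_mem _ rfl)) _
      (Submodule.subset_span (Set.mem_insert _ _))
  · intro h
    refine isIsotropicLine_span_pair (F.linearIndependent_transversal t) ?_ ?_ ?_ ?_
    · simp [F.apply_eq, hq]
    · simpa [F.apply_eq, hq] using sum_direction_pow_mul_eq_zero_iff.mpr ⟨1, (one_smul k _).symm⟩
    · simpa [F.apply_eq, hq] using h
    · simp [F.apply_eq, hq]

variable [FiniteDimensional k V]

theorem exists_eq_graph {L : Submodule k V} (hL : finrank k L = 2)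
    (hdisj : Disjoint L F.infinity) : ∃ M, L = F.graph M := by
  let φ : L →ₗ[k] Fin 2 → k := LinearMap.fst k _ _ ∘ₗ F.coord.toLinearMap ∘ₗ L.subtype
  have hφ : Function.Injective φ := (injective_iff_map_eq_zero φ).mpr fun v hv =>
    Subtype.ext (Submodule.disjoint_def.mp hdisj v v.2 (F.mem_infinity.mpr hv))
  let e := LinearEquiv.ofInjectiveOfFinrankEq φ hφ (by rw [hL, Module.finrank_fin_fun])
  refine ⟨LinearMap.toMatrix' (LinearMap.snd k _ _ ∘ₗ F.coord.toLinearMap ∘ₗ L.subtype ∘ₗ e.symm),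
    Submodule.eq_of_le_of_finrank_eq (fun v hv => ?_) (by rw [hL, finrank_graph])⟩
  rw [mem_graph, ← Matrix.toLin'_apply, Matrix.toLin'_toMatrix',
    show (F.coord v).1 = e ⟨v, hv⟩ from rfl]
  simp

theorem exists_eq_transversal {L : Submodule k V} (hL : IsIsotropicLine B L)
    (hzero : ¬Disjoint L (F.graph 0)) (hinf : ¬Disjoint L F.infinity) :
    ∃ t, L = F.transversal t := by
  rw [Submodule.disjoint_def] at hzero hinf
  push Not at hzero hinf
  obtain ⟨u, huL, hu, hu0⟩ := hzero
  obtain ⟨v, hvL, hv, hv0⟩ := hinf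
  rw [mem_graph, Matrix.zero_mulVec] at hu
  rw [mem_infinity] at hv
  obtain ⟨t, c, hc⟩ := exists_eq_smul_direction (F.coord u).1
  have huc : u = c • F.coord.symm (direction t, 0) := by
    rw [← map_smul, LinearEquiv.eq_symm_apply, Prod.smul_mk, smul_zero, ← hc, ← hu]
  have hc0 : c ≠ 0 := fun h => hu0 (by rw [huc, h, zero_smul])
  obtain ⟨d, hd⟩ : ∃ d : k, (F.coord v).2 = d • codirection q t := by
    have hpair := hL.2 u huL v hvL
    rw [huc, apply_smul_left] at hpair
    rw [← sum_direction_pow_mul_eq_zero_iff]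
    simpa [F.apply_eq, hv, hc0] using hpair
  have hvd : v = d • F.coord.symm (0, codirection q t) := by
    rw [← map_smul, LinearEquiv.eq_symm_apply, Prod.smul_mk, smul_zero, ← hd, ← hv]
  have hd0 : d ≠ 0 := fun h => hv0 (by rw [hvd, h, zero_smul])
  refine ⟨t, (Submodule.eq_of_le_of_finrank_eq (Submodule.span_le.mpr ?_)
    ((F.finrank_transversal t).trans hL.1.symm)).symm⟩
  rw [Set.insert_subset_iff, Set.singleton_subset_iff]
  exact ⟨(L.smul_mem_iff hc0).mp (huc ▸ huL), (L.smul_mem_iff hd0).mp (hvd ▸ hvL)⟩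

end HyperbolicFrame

end HyperbolicFrame

section FrameExistence

variable {k : Type*} [Field k] {q : ℕ} [IsFrobeniusPower k q]
  {V : Type*} [AddCommGroup V] [Module k V] [FiniteDimensional k V] {B : FrobeniusForm k q V}

theorem exists_dual_family {L L' : Submodule k V}
    (hL : L.orthogonalBilin B = L) (hdisj : Disjoint L L') {n : ℕ} (hn : finrank k L' = n)
    {e : Fin n → V} (he : Submodule.span k (Set.range e) = L) :
    ∃ f : Fin n → V, (∀ i, f i ∈ L') ∧ ∀ i j, B (e i) (f j) = if i = j then 1 else 0 := by
  let φ : L' →ₗ[k] Fin n → k := (LinearMap.pi fun i => B (e i)) ∘ₗ L'.subtype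
  have hφ : Function.Injective φ := (injective_iff_map_eq_zero φ).mpr fun w hw => by
    have hwL : (w : V) ∈ L.orthogonalBilin B := Submodule.mem_orthogonalBilin_iff.mpr fun x hx => by
      rw [← he] at hx
      induction hx using Submodule.span_induction with
      | mem x hx => obtain ⟨i, rfl⟩ := hx; exact congrFun hw i
      | zero => simp
      | add x y _ _ hx hy => simp [hx, hy]
      | smul c x _ hx => simp [hx]
    exact Subtype.ext (Submodule.disjoint_def.mp hdisj w (hL ▸ hwL) w.2)
  have hsurj : Function.Surjective φ :=
    (LinearMap.injective_iff_surjective_of_finrank_eq_finrank (by simp [hn])).mp hφ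
  choose f hf using fun j => hsurj (Pi.single j 1)
  exact ⟨fun j => f j, fun j => (f j).2, fun i j => (congrFun (hf j) i).trans (Pi.single_apply ..)⟩

variable [IsAlgClosed k]

theorem exists_isHermitianVec_span_range_eq (hB : B.Nondegenerate) {L : Submodule k V}
    (hL : L.orthogonalBilin B = L) {n : ℕ} (hn : finrank k L = n) :
    ∃ e : Fin n → V, (∀ i, IsHermitianVec B (e i)) ∧ Submodule.span k (Set.range e) = L := by
  obtain ⟨b, hbsub, hbspan, hbli⟩ :=
    exists_linearIndependent k {e | e ∈ L ∧ IsHermitianVec B e}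
  have hspan : Submodule.span k b = L := hbspan.trans
    ((Submodule.span_le.mpr fun e he => he.1).antisymm (le_span_isHermitianVec hB hL))
  have : Finite b := hbli.finite
  have hcard : Nat.card b = n := by
    have := Fintype.ofFinite b
    rw [← hn, ← hspan, finrank_span_set_eq_card hbli, Set.toFinset_card, Nat.card_eq_fintype_card]
  let ε : Fin n ≃ b := (Finite.equivFinOfCardEq hcard).symm
  refine ⟨fun i => ε i, fun i => (hbsub (ε i).2).2, ?_⟩
  rw [← hspan, ← Function.comp_def, Set.range_comp, ε.range_eq_univ, Set.image_univ,
    Subtype.range_coe]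

theorem HyperbolicFrame.exists_graph_zero_eq_infinity_eq (hB : B.Nondegenerate)
    (hV : finrank k V = 4) {L L' : Submodule k V} (hL : IsIsotropicLine B L)
    (hL' : IsIsotropicLine B L') (hdisj : Disjoint L L') :
    ∃ F : HyperbolicFrame B, F.graph 0 = L ∧ F.infinity = L' := by
  have hperp := hL.orthogonalBilin_eq hB.1 hV
  obtain ⟨e, he, hspan⟩ := exists_isHermitianVec_span_range_eq hB hperp hL.1
  obtain ⟨f, hf, hef⟩ := exists_dual_family hperp hdisj hL'.1 hspan
  have hfe (i j) : B (f i) (e j) = if i = j then 1 else 0 := by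
    rw [he j, hef]; split_ifs <;> simp_all [IsFrobeniusPower.ne_zero k q]
  have heL (i) : e i ∈ L := hspan ▸ Submodule.subset_span ⟨i, rfl⟩
  let C : V →ₗ[k] (Fin 2 → k) × (Fin 2 → k) :=
    (LinearMap.pi fun i => B (f i)).prod (LinearMap.pi fun i => B (e i))
  let combination (a : (Fin 2 → k) × (Fin 2 → k)) : V := ∑ i, (a.1 i • e i + a.2 i • f i)
  have hC (a) : C (combination a) = a := by
    ext i <;> fin_cases i <;>
      simp [C, combination, hfe, hef, hL.2 _ (heL _) _ (heL _), hL'.2 _ (hf _) _ (hf _)]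
  have hCinj : Function.Injective C :=
    (LinearMap.injective_iff_surjective_of_finrank_eq_finrank (by simp [hV])).mpr
      (Function.LeftInverse.surjective hC)
  let F : HyperbolicFrame B :=
    { coord := LinearEquiv.ofBijective C ⟨hCinj, Function.LeftInverse.surjective hC⟩
      apply_eq u v := by
        conv_lhs => rw [show u = combination (C u) from hCinj (hC _).symm]
        simp only [combination, Fin.sum_univ_two, map_add, LinearMap.map_smulₛₗ, frob_apply,
          LinearMap.add_apply, LinearMap.smul_apply, smul_eq_mul]
        rfl }
  refine ⟨F, (Submodule.eq_of_le_of_finrank_eq (fun v hv => ?_) ?_).symm,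
    (Submodule.eq_of_le_of_finrank_eq (fun v hv => ?_) ?_).symm⟩
  · rw [F.mem_graph, Matrix.zero_mulVec]
    exact funext fun i => hL.2 _ (heL i) v hv
  · rw [hL.1, F.finrank_graph]
  · rw [F.mem_infinity]
    exact funext fun i => hL'.2 _ (hf i) v hv
  · rw [hL'.1, F.finrank_infinity]

end FrameExistence

section Grid

theorem ncard_setOf_mem_and_mem {α β : Type*} {s : Set α} {t : α → Set β} {n : ℕ} (hs : s.Finite)
    (hn : n ≠ 0) (ht : ∀ x ∈ s, (t x).ncard = n) :
    {p : α × β | p.1 ∈ s ∧ p.2 ∈ t p.1}.ncard = s.ncard * n := by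
  have htfin (x : s) : Finite (t x) := Set.finite_of_ncard_ne_zero ((ht x x.2).trans_ne hn)
  have := hs.fintype
  let e : {p : α × β | p.1 ∈ s ∧ p.2 ∈ t p.1} ≃ Σ x : s, t x :=
    { toFun p := ⟨⟨p.1.1, p.2.1⟩, p.1.2, p.2.2⟩
      invFun p := ⟨(p.1, p.2), p.1.2, p.2.2⟩ }
  rw [← Nat.card_coe_set_eq, Nat.card_congr e, Nat.card_sigma,
    Finset.sum_congr rfl fun (x : s) _ => (Nat.card_coe_set_eq (t x)).trans (ht x x.2),
    Finset.sum_const, Finset.card_univ, smul_eq_mul, ← Nat.card_eq_fintype_card,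
    Nat.card_coe_set_eq]

variable {α : Type*} [PartialOrder α] [OrderBot α]

/-- The elements of `Λ` meeting every element of `T`; two elements of an order meet when they are
not `Disjoint`. -/
def transversals (Λ T : Set α) : Set α := {x ∈ Λ | ∀ y ∈ T, ¬Disjoint x y}

/-- The ordered triples of pairwise disjoint elements of `s`. -/
def disjointTriples (s : Set α) : Set (α × α × α) :=
  {τ | τ.1 ∈ s ∧ (τ.2.1 ∈ s ∧ Disjoint τ.1 τ.2.1) ∧
    τ.2.2 ∈ s ∧ Disjoint τ.1 τ.2.2 ∧ Disjoint τ.2.1 τ.2.2}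

/-- The two rulings of a quadric configuration of degree `d`. -/
structure IsGrid (d : ℕ) (𝒜 ℬ : Set α) : Prop where
  ncard_left : 𝒜.ncard = d
  ncard_right : ℬ.ncard = d
  disjoint_left : 𝒜.Pairwise Disjoint
  disjoint_right : ℬ.Pairwise Disjoint
  not_disjoint : ∀ x ∈ 𝒜, ∀ y ∈ ℬ, ¬Disjoint x y

/-- The unions of the two rulings of a grid, within `Λ`. -/
def gridUnions (d : ℕ) (Λ : Set α) : Set (Set α) :=
  {S | S ⊆ Λ ∧ ∃ 𝒜 ℬ, IsGrid d 𝒜 ℬ ∧ 𝒜 ∪ ℬ = S}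

theorem disjointTriples_mono {s t : Set α} (hst : s ⊆ t) : disjointTriples s ⊆ disjointTriples t :=
  fun _ ⟨hx, ⟨hy, hxy⟩, hz, hxyz⟩ => ⟨hst hx, ⟨hst hy, hxy⟩, hst hz, hxyz⟩

theorem mem_disjointTriples_of_subset {s t : Set α} {x y z : α}
    (hτ : (x, y, z) ∈ disjointTriples s) (ht : {x, y, z} ⊆ t) : (x, y, z) ∈ disjointTriples t := by
  simp only [Set.insert_subset_iff, Set.singleton_subset_iff] at ht
  exact ⟨ht.1, ⟨ht.2.1, hτ.2.1.2⟩, ht.2.2, hτ.2.2.2⟩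

theorem ncard_disjointTriples {s : Set α} {a b : ℕ} (hs : s.Finite) (ha : a ≠ 0) (hb : b ≠ 0)
    (hs₁ : ∀ x ∈ s, {y ∈ s | Disjoint x y}.ncard = a)
    (hs₂ : ∀ x ∈ s, ∀ y ∈ s, Disjoint x y → {z ∈ s | Disjoint x z ∧ Disjoint y z}.ncard = b) :
    (disjointTriples s).ncard = s.ncard * (a * b) :=
  ncard_setOf_mem_and_mem
    (t := fun x => {σ : α × α |
      (σ.1 ∈ s ∧ Disjoint x σ.1) ∧ σ.2 ∈ s ∧ Disjoint x σ.2 ∧ Disjoint σ.1 σ.2})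
    hs (mul_ne_zero ha hb) fun x hx => by
      rw [← hs₁ x hx]
      exact ncard_setOf_mem_and_mem (t := fun y => {z ∈ s | Disjoint x z ∧ Disjoint y z})
        (hs.sep _) hb fun y hy => hs₂ x hx y hy.1 hy.2

namespace IsGrid

variable {d : ℕ} {𝒜 ℬ : Set α}

theorem symm (h : IsGrid d 𝒜 ℬ) : IsGrid d ℬ 𝒜 where
  ncard_left := h.ncard_right
  ncard_right := h.ncard_left
  disjoint_left := h.disjoint_right
  disjoint_right := h.disjoint_left
  not_disjoint x hx y hy hxy := h.not_disjoint y hy x hx hxy.symm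

variable (h : IsGrid d 𝒜 ℬ) (hd : 3 ≤ d)

include h hd

theorem finite_left : 𝒜.Finite := Set.finite_of_ncard_pos (by rw [h.ncard_left]; lia)

theorem ne_bot {x : α} (hx : x ∈ 𝒜) : x ≠ ⊥ := by
  obtain ⟨y, hy⟩ := Set.nonempty_of_ncard_ne_zero (s := ℬ) (by rw [h.ncard_right]; lia)
  rintro rfl
  exact h.not_disjoint ⊥ hx y hy disjoint_bot_left

theorem disjoint : Disjoint 𝒜 ℬ := by
  refine Set.disjoint_left.mpr fun x hxA hxB => ?_
  obtain ⟨y, hyA, hyx⟩ := Set.exists_ne_of_one_lt_ncard (s := 𝒜) (by rw [h.ncard_left]; lia) x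
  exact h.not_disjoint y hyA x hxB (h.disjoint_left hyA hxA hyx)

theorem ncard_union : (𝒜 ∪ ℬ).ncard = 2 * d := by
  rw [Set.ncard_union_eq (h.disjoint hd) (h.finite_left hd) (h.symm.finite_left hd), h.ncard_left,
    h.ncard_right, two_mul]

theorem mem_union_and_disjoint_iff {x y : α} (hx : x ∈ 𝒜) :
    y ∈ 𝒜 ∪ ℬ ∧ Disjoint x y ↔ y ∈ 𝒜 ∧ y ≠ x := by
  constructor
  · rintro ⟨hyA | hyB, hxy⟩
    · exact ⟨hyA, (hxy.ne (h.ne_bot hd hx)).symm⟩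
    · exact (h.not_disjoint x hx y hyB hxy).elim
  · exact fun ⟨hyA, hyx⟩ => ⟨Or.inl hyA, h.disjoint_left hx hyA hyx.symm⟩

theorem ncard_disjoint_of_mem_left {x : α} (hx : x ∈ 𝒜) :
    {y ∈ 𝒜 ∪ ℬ | Disjoint x y}.ncard = d - 1 := by
  have hset : {y ∈ 𝒜 ∪ ℬ | Disjoint x y} = 𝒜 \ {x} :=
    Set.ext fun y => h.mem_union_and_disjoint_iff hd hx
  rw [hset, Set.ncard_sdiff_singleton_of_mem hx, h.ncard_left]

theorem ncard_disjoint_disjoint_of_mem_left {x y : α} (hx : x ∈ 𝒜) (hy : y ∈ 𝒜 ∪ ℬ)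
    (hxy : Disjoint x y) : {z ∈ 𝒜 ∪ ℬ | Disjoint x z ∧ Disjoint y z}.ncard = d - 2 := by
  obtain ⟨hyA, hyx⟩ := (h.mem_union_and_disjoint_iff hd hx).mp ⟨hy, hxy⟩
  have hset : {z ∈ 𝒜 ∪ ℬ | Disjoint x z ∧ Disjoint y z} = (𝒜 \ {x}) \ {y} := by
    ext z
    have hxz := h.mem_union_and_disjoint_iff hd hx (y := z)
    have hyz := h.mem_union_and_disjoint_iff hd hyA (y := z)
    simp only [Set.mem_ofPred_eq, Set.mem_sdiff, Set.mem_singleton_iff]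
    tauto
  have hyAx : y ∈ 𝒜 \ {x} := ⟨hyA, hyx⟩
  rw [hset, Set.ncard_sdiff_singleton_of_mem hyAx, Set.ncard_sdiff_singleton_of_mem hx,
    h.ncard_left, Nat.sub_sub]

theorem ncard_disjointTriples_union :
    (disjointTriples (𝒜 ∪ ℬ)).ncard = 2 * d * ((d - 1) * (d - 2)) := by
  rw [← h.ncard_union hd]
  refine ncard_disjointTriples ((h.finite_left hd).union (h.symm.finite_left hd)) (by lia) (by lia)
    ?_ ?_
  · rintro x (hx | hx)
    · exact h.ncard_disjoint_of_mem_left hd hx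
    · exact Set.union_comm 𝒜 ℬ ▸ h.symm.ncard_disjoint_of_mem_left hd hx
  · rintro x (hx | hx) y hy hxy
    · exact h.ncard_disjoint_disjoint_of_mem_left hd hx hy hxy
    · rw [Set.union_comm] at hy ⊢
      exact h.symm.ncard_disjoint_disjoint_of_mem_left hd hx hy hxy

theorem subset_left_or_subset_right {x y z : α} (hτ : (x, y, z) ∈ disjointTriples (𝒜 ∪ ℬ)) :
    {x, y, z} ⊆ 𝒜 ∨ {x, y, z} ⊆ ℬ := by
  obtain ⟨hx, ⟨hy, hxy⟩, hz, hxz, -⟩ := hτ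
  simp only [Set.insert_subset_iff, Set.singleton_subset_iff]
  rcases hx with hx | hx
  · exact .inl ⟨hx, ((h.mem_union_and_disjoint_iff hd hx).mp ⟨hy, hxy⟩).1,
      ((h.mem_union_and_disjoint_iff hd hx).mp ⟨hz, hxz⟩).1⟩
  · rw [Set.union_comm] at hy hz
    exact .inr ⟨hx, ((h.symm.mem_union_and_disjoint_iff hd hx).mp ⟨hy, hxy⟩).1,
      ((h.symm.mem_union_and_disjoint_iff hd hx).mp ⟨hz, hxz⟩).1⟩

end IsGrid

theorem exists_isGrid_of_mem_gridUnions {d : ℕ} (hd : 3 ≤ d) {Λ S : Set α}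
    (hS : S ∈ gridUnions d Λ) {x y z : α} (hτ : (x, y, z) ∈ disjointTriples S) :
    ∃ 𝒜 ℬ, IsGrid d 𝒜 ℬ ∧ 𝒜 ∪ ℬ = S ∧ {x, y, z} ⊆ 𝒜 := by
  obtain ⟨-, 𝒜, ℬ, h, rfl⟩ := hS
  rcases h.subset_left_or_subset_right hd hτ with hτA | hτB
  · exact ⟨𝒜, ℬ, h, rfl, hτA⟩
  · exact ⟨ℬ, 𝒜, h.symm, Set.union_comm .., hτB⟩

section Transversals

variable {d : ℕ} (hd : 3 ≤ d) {Λ : Set α}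
  (hΛ : ∀ x y z, (x, y, z) ∈ disjointTriples Λ → (transversals Λ {x, y, z}).ncard = d)

include hd hΛ

theorem IsGrid.right_eq_transversals {𝒜 ℬ : Set α} (h : IsGrid d 𝒜 ℬ) (hsub : 𝒜 ∪ ℬ ⊆ Λ)
    {x y z : α} (hτ : (x, y, z) ∈ disjointTriples Λ) (hτA : {x, y, z} ⊆ 𝒜) :
    ℬ = transversals Λ {x, y, z} := by
  refine Set.eq_of_subset_of_ncard_le (fun w hw => ⟨hsub (.inr hw), fun v hv => ?_⟩)
    (by rw [hΛ x y z hτ, h.ncard_right]) (Set.finite_of_ncard_pos (by rw [hΛ x y z hτ]; lia))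
  exact h.symm.not_disjoint w hw v (hτA hv)

theorem IsGrid.left_unique {𝒜 𝒜' ℬ : Set α} (h : IsGrid d 𝒜 ℬ) (h' : IsGrid d 𝒜' ℬ)
    (hsub : 𝒜 ∪ ℬ ⊆ Λ) (hsub' : 𝒜' ∪ ℬ ⊆ Λ) : 𝒜 = 𝒜' := by
  obtain ⟨x, hx, y, hy, z, hz, hxy, hxz, hyz⟩ :=
    (Set.two_lt_ncard (h.symm.finite_left hd)).mp (by rw [h.ncard_right]; lia)
  have hτ : (x, y, z) ∈ disjointTriples Λ :=
    ⟨hsub (.inr hx), ⟨hsub (.inr hy), h.disjoint_right hx hy hxy⟩, hsub (.inr hz),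
      h.disjoint_right hx hz hxz, h.disjoint_right hy hz hyz⟩
  have hτB : {x, y, z} ⊆ ℬ := by simp [Set.insert_subset_iff, hx, hy, hz]
  rw [Set.union_comm] at hsub hsub'
  rw [h.symm.right_eq_transversals hd hΛ hsub hτ hτB,
    h'.symm.right_eq_transversals hd hΛ hsub' hτ hτB]

theorem IsGrid.union_unique {𝒜 ℬ 𝒜' ℬ' : Set α} (h : IsGrid d 𝒜 ℬ) (h' : IsGrid d 𝒜' ℬ')
    (hsub : 𝒜 ∪ ℬ ⊆ Λ) (hsub' : 𝒜' ∪ ℬ' ⊆ Λ) {x y z : α} (hτ : (x, y, z) ∈ disjointTriples Λ)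
    (hτA : {x, y, z} ⊆ 𝒜) (hτA' : {x, y, z} ⊆ 𝒜') : 𝒜 ∪ ℬ = 𝒜' ∪ ℬ' := by
  obtain rfl : ℬ = ℬ' := (h.right_eq_transversals hd hΛ hsub hτ hτA).trans
    (h'.right_eq_transversals hd hΛ hsub' hτ hτA').symm
  rw [h.left_unique hd hΛ h' hsub hsub']

theorem ncard_gridUnions_mul (hfin : Λ.Finite)
    (hgrid : ∀ x y z, (x, y, z) ∈ disjointTriples Λ →
      ∃ 𝒜 ℬ, IsGrid d 𝒜 ℬ ∧ 𝒜 ∪ ℬ ⊆ Λ ∧ {x, y, z} ⊆ 𝒜) :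
    (gridUnions d Λ).ncard * (2 * d * ((d - 1) * (d - 2))) = (disjointTriples Λ).ncard := by
  have hsnd : Prod.snd '' {p : Set α × _ | p.1 ∈ gridUnions d Λ ∧ p.2 ∈ disjointTriples p.1} =
      disjointTriples Λ := by
    ext ⟨x, y, z⟩
    constructor
    · rintro ⟨⟨S, _⟩, ⟨hS, hτ⟩, rfl⟩
      exact disjointTriples_mono hS.1 hτ
    · intro hτ
      obtain ⟨𝒜, ℬ, h, hsub, hτA⟩ := hgrid x y z hτ
      exact ⟨(𝒜 ∪ ℬ, _), ⟨⟨hsub, 𝒜, ℬ, h, rfl⟩,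
        mem_disjointTriples_of_subset hτ (hτA.trans Set.subset_union_left)⟩, rfl⟩
  have hinj : Set.InjOn Prod.snd
      {p : Set α × _ | p.1 ∈ gridUnions d Λ ∧ p.2 ∈ disjointTriples p.1} := by
    rintro ⟨S, x, y, z⟩ ⟨hS, hτ⟩ ⟨S', _⟩ ⟨hS', hτ'⟩ rfl
    obtain ⟨𝒜, ℬ, h, rfl, hτA⟩ := exists_isGrid_of_mem_gridUnions hd hS hτ
    obtain ⟨𝒜', ℬ', h', rfl, hτA'⟩ := exists_isGrid_of_mem_gridUnions hd hS' hτ'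
    rw [h.union_unique hd hΛ h' hS.1 hS'.1 (disjointTriples_mono hS.1 hτ) hτA hτA']
  have hd' : (d - 1) * (d - 2) ≠ 0 := mul_ne_zero (by lia) (by lia)
  rw [← hsnd, hinj.ncard_image]
  refine (ncard_setOf_mem_and_mem (t := disjointTriples)
    (hfin.finite_subsets.subset fun S hS => hS.1) (mul_ne_zero (by lia) hd') ?_).symm
  rintro _ ⟨-, 𝒜, ℬ, h, rfl⟩
  exact h.ncard_disjointTriples_union hd

end Transversals

end Grid

theorem ncard_sep_add_ncard_sep_not {α : Type*} {s : Set α} (hs : s.Finite) (p : α → Prop) :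
    {x ∈ s | p x}.ncard + {x ∈ s | ¬p x}.ncard = s.ncard :=
  Set.ncard_inter_add_ncard_sdiff_eq_ncard s {x | p x} hs

section SkewHermitian

variable {k : Type*} [Field k] {q : ℕ} [IsFrobeniusPower k q]

namespace HyperbolicFrame

theorem mem_skewHermitian_iff {M : Matrix (Fin 2) (Fin 2) k} : M ∈ skewHermitian k q ↔
    M 0 0 ^ q = -M 0 0 ∧ M 0 1 ^ q ^ 2 = M 0 1 ∧ M 1 0 = -M 0 1 ^ q ∧ M 1 1 ^ q = -M 1 1 := by
  have hneg : (-M 0 1 ^ q) ^ q = -M 0 1 ^ q ^ 2 := by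
    rw [IsFrobeniusPower.neg_pow, ← pow_mul, ← sq]
  constructor
  · intro h
    have h10 : M 1 0 = -M 0 1 ^ q := by rw [h 1 0, neg_neg]
    exact ⟨h 0 0, neg_injective (by rw [← hneg, ← h10, h 0 1]), h10, h 1 1⟩
  · rintro ⟨h00, h01, h10, h11⟩ i j
    fin_cases i <;> fin_cases j <;> simp [*]

variable [IsAlgClosed k]

theorem ncard_skewHermitian : (skewHermitian k q).ncard = q ^ 4 := by
  have himage : skewHermitian k q = (fun z : k × k × k => !![z.1, z.2.1; -z.2.1 ^ q, z.2.2]) ''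
      ({a | a ^ q = -a} ×ˢ {b | b ^ q ^ 2 = b} ×ˢ {d | d ^ q = -d}) := by
    ext M
    constructor
    · intro hM
      obtain ⟨ha, hb, hc, hd⟩ := mem_skewHermitian_iff.mp hM
      exact ⟨(M 0 0, M 0 1, M 1 1), ⟨ha, hb, hd⟩, by simpa [← hc] using M.eta_fin_two.symm⟩
    · rintro ⟨⟨a, b, d⟩, ⟨ha, hb, hd⟩, rfl⟩
      exact mem_skewHermitian_iff.mpr ⟨ha, hb, rfl, hd⟩
  rw [himage, Set.ncard_image_of_injective, Set.ncard_prod, Set.ncard_prod, ncard_setOf_pow_eq_neg,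
    ncard_setOf_pow_eq_self]
  · ring
  · rintro ⟨a, b, d⟩ ⟨a', b', d'⟩ h
    simp_all

theorem ncard_skewHermitian_det_eq_zero_apply_eq_zero :
    {M ∈ skewHermitian k q | M.det = 0 ∧ M 0 0 = 0}.ncard = q := by
  have hq := IsFrobeniusPower.ne_zero k q
  have himage : {M ∈ skewHermitian k q | M.det = 0 ∧ M 0 0 = 0} =
      (fun d => !![0, 0; 0, d]) '' {d | d ^ q = -d} := by
    ext M
    constructor
    · rintro ⟨hM, hdet, ha⟩
      obtain ⟨-, -, hc, hd⟩ := mem_skewHermitian_iff.mp hM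
      have hb : M 0 1 = 0 := by simpa [Matrix.det_fin_two, ha, hc, hq] using hdet
      refine ⟨M 1 1, hd, .trans ?_ M.eta_fin_two.symm⟩
      simp [ha, hb, hc, hq]
    · rintro ⟨d, hd, rfl⟩
      exact ⟨mem_skewHermitian_iff.mpr (by simpa [hq] using hd), by simp⟩
  rw [himage, Set.ncard_image_of_injective, ncard_setOf_pow_eq_neg]
  exact fun d d' h => congrFun₂ h 1 1

theorem ncard_skewHermitian_det_eq_zero_apply_ne_zero :
    {M ∈ skewHermitian k q | M.det = 0 ∧ M 0 0 ≠ 0}.ncard = (q - 1) * q ^ 2 := by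
  have himage : {M ∈ skewHermitian k q | M.det = 0 ∧ M 0 0 ≠ 0} =
      (fun z : k × k => !![z.1, z.2; -z.2 ^ q, -z.2 ^ (q + 1) / z.1]) ''
        (({a | a ^ q = -a} \ {0}) ×ˢ {b | b ^ q ^ 2 = b}) := by
    ext M
    constructor
    · rintro ⟨hM, hdet, ha0⟩
      obtain ⟨ha, hb, hc, -⟩ := mem_skewHermitian_iff.mp hM
      rw [Matrix.det_fin_two, hc] at hdet
      have hd : M 1 1 = -M 0 1 ^ (q + 1) / M 0 0 := by
        rw [eq_div_iff ha0]
        linear_combination hdet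
      exact ⟨(M 0 0, M 0 1), ⟨⟨ha, ha0⟩, hb⟩, by simpa [← hc, ← hd] using M.eta_fin_two.symm⟩
    · rintro ⟨⟨a, b⟩, ⟨⟨ha, ha0⟩, hb⟩, rfl⟩
      have hnorm : (-b ^ (q + 1)) ^ q = -b ^ (q + 1) := by
        rw [IsFrobeniusPower.neg_pow, pow_succ, mul_pow, ← pow_mul, ← sq, hb, mul_comm]
      refine ⟨mem_skewHermitian_iff.mpr ⟨ha, hb, rfl, ?_⟩, ?_, ha0⟩
      · exact (div_pow _ _ q).trans (by rw [hnorm, ha, div_neg]; rfl)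
      · rw [Matrix.det_fin_two_of, mul_div_cancel₀ _ ha0]
        ring
  rw [himage, Set.ncard_image_of_injective, Set.ncard_prod, Set.ncard_sdiff_singleton_of_mem,
    ncard_setOf_pow_eq_neg, ncard_setOf_pow_eq_self]
  · simp [IsFrobeniusPower.ne_zero k q]
  · exact fun z z' h => Prod.ext (congrFun₂ h 0 0) (congrFun₂ h 0 1)

theorem finite_skewHermitian : (skewHermitian k q).Finite :=
  Set.finite_of_ncard_ne_zero (by simp [ncard_skewHermitian, IsFrobeniusPower.ne_zero k q])

theorem ncard_skewHermitian_det_ne_zero :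
    {M ∈ skewHermitian k q | M.det ≠ 0}.ncard = q * (q - 1) * (q ^ 2 + 1) := by
  have hfin := finite_skewHermitian (k := k) (q := q)
  have hdet := ncard_sep_add_ncard_sep_not hfin (·.det = 0)
  have happly := ncard_sep_add_ncard_sep_not (hfin.sep (·.det = 0)) (· 0 0 = 0)
  simp only [Set.mem_ofPred_eq, and_assoc] at happly
  rw [ncard_skewHermitian_det_eq_zero_apply_eq_zero,
    ncard_skewHermitian_det_eq_zero_apply_ne_zero] at happly
  rw [← happly, ncard_skewHermitian] at hdet
  obtain ⟨r, rfl⟩ := Nat.exists_eq_add_of_lt (IsFrobeniusPower.one_lt k q)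
  simp only [Nat.add_sub_cancel] at hdet ⊢
  linarith

end HyperbolicFrame

end SkewHermitian

section IsotropicPoints

variable {k : Type*} [Field k] {q : ℕ}

namespace HyperbolicFrame

/-- The points of the projective line at which the form `∑ i, ∑ j, M i j * x i ^ q * x j`
vanishes. They parametrize the transversals of `y = 0`, `x = 0` and `y = M x`. -/
def isotropicPoints (q : ℕ) (M : Matrix (Fin 2) (Fin 2) k) : Set (Option k) :=
  {t | ∑ i, direction t i ^ q * M.mulVec (direction t) i = 0}

theorem isotropicPoints_subset_isotropicPoints_smul (c : k) (M : Matrix (Fin 2) (Fin 2) k) :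
    isotropicPoints q M ⊆ isotropicPoints q (c • M) := fun t ht => by
  have hsmul : ∑ i, direction t i ^ q * (c • M).mulVec (direction t) i =
      c * ∑ i, direction t i ^ q * M.mulVec (direction t) i := by
    simp only [Matrix.smul_mulVec, Pi.smul_apply, smul_eq_mul, Finset.mul_sum, mul_left_comm]
  exact hsmul.trans (mul_eq_zero_of_right c ht)

variable [IsFrobeniusPower k q] {M : Matrix (Fin 2) (Fin 2) k}

theorem none_mem_isotropicPoints_iff : none ∈ isotropicPoints q M ↔ M 1 1 = 0 := by
  simp [isotropicPoints, direction, Matrix.mulVec, dotProduct, IsFrobeniusPower.ne_zero k q]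

theorem some_mem_isotropicPoints_iff (hM : M ∈ skewHermitian k q) {t : k} :
    some t ∈ isotropicPoints q M ↔ M 0 0 + M 0 1 * t + t ^ q * (-M 0 1 ^ q + M 1 1 * t) = 0 := by
  simp [isotropicPoints, direction, Matrix.mulVec, dotProduct, (mem_skewHermitian_iff.mp hM).2.2.1]

theorem det_eq_of_mem_skewHermitian (hM : M ∈ skewHermitian k q) :
    M.det = M 0 0 * M 1 1 + M 0 1 ^ (q + 1) := by
  rw [Matrix.det_fin_two, (mem_skewHermitian_iff.mp hM).2.2.1]
  ring

theorem isotropicPoints_subset_rationalPoints (hM : M ∈ skewHermitian k q) (hdet : M.det ≠ 0) :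
    isotropicPoints q M ⊆ rationalPoints k q := by
  rintro (_ | t) ht
  · exact Set.mem_insert _ _
  rw [some_mem_isotropicPoints_iff hM] at ht
  obtain ⟨ha, hb, -, hd⟩ := mem_skewHermitian_iff.mp hM
  have hfrob := congrArg (frob k q) ht
  simp only [map_add, map_mul, map_neg, map_zero, map_pow, frob_apply, ha, hd, ← pow_mul, ← sq, hb]
    at hfrob
  have hfactor : (t - t ^ q ^ 2) * (M 0 1 + M 1 1 * t ^ q) = 0 := by linear_combination ht + hfrob
  have hne : M 0 1 + M 1 1 * t ^ q ≠ 0 := fun h => hdet <| by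
    rw [det_eq_of_mem_skewHermitian hM, pow_succ]
    linear_combination M 1 1 * ht + (M 0 1 ^ q - M 1 1 * t) * h
  exact Set.mem_insert_of_mem _
    ⟨t, (sub_eq_zero.mp ((mul_eq_zero.mp hfactor).resolve_right hne)).symm, rfl⟩

variable [IsAlgClosed k]

theorem ncard_rationalPoints : (rationalPoints k q).ncard = q ^ 2 + 1 := by
  have hcard : {t : k | t ^ q ^ 2 = t}.ncard = q ^ 2 := ncard_setOf_pow_eq_self
  have hfin : {t : k | t ^ q ^ 2 = t}.Finite :=
    Set.finite_of_ncard_ne_zero (by simp [hcard, IsFrobeniusPower.ne_zero k q])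
  rw [rationalPoints, Set.ncard_insert_of_notMem (by simp) (hfin.image _),
    Set.ncard_image_of_injective _ (Option.some_injective _), hcard]

theorem ncard_isotropicPoints (hM : M ∈ skewHermitian k q) (hdet : M.det ≠ 0) :
    (isotropicPoints q M).ncard = q + 1 := by
  classical
  set Z := {t : k | M 0 0 + M 0 1 * t + t ^ q * (-M 0 1 ^ q + M 1 1 * t) = 0}
  have hZ : Z.ncard = if M 1 1 = 0 then q else q + 1 :=
    ncard_setOf_skewHermitian_eq_zero (det_eq_of_mem_skewHermitian hM ▸ hdet)
  have hfin : Z.Finite := Set.finite_of_ncard_ne_zero (by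
    have := IsFrobeniusPower.ne_zero k q
    split_ifs at hZ <;> lia)
  have hpoints : isotropicPoints q M =
      if M 1 1 = 0 then insert none (some '' Z) else some '' Z := by
    ext (_ | t)
    · split_ifs with h <;> simp [none_mem_isotropicPoints_iff, h]
    · rw [some_mem_isotropicPoints_iff hM]
      split_ifs <;> simp [Z]
  rw [hpoints]
  split_ifs with h
  · rw [Set.ncard_insert_of_notMem (by simp) (hfin.image _),
      Set.ncard_image_of_injective _ (Option.some_injective _), hZ, if_pos h]
  · rw [Set.ncard_image_of_injective _ (Option.some_injective _), hZ, if_neg h]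

end HyperbolicFrame

end IsotropicPoints

section LinesInFrame

/-- The set of isotropic lines of a Frobenius form. -/
def isotropicLines {k : Type*} [Field k] {q : ℕ} [IsFrobeniusPower k q] {V : Type*}
    [AddCommGroup V] [Module k V] (B : FrobeniusForm k q V) : Set (Submodule k V) :=
  {L | IsIsotropicLine B L}

variable {k : Type*} [Field k] {q : ℕ} [IsFrobeniusPower k q]
  {V : Type*} [AddCommGroup V] [Module k V] {B : FrobeniusForm k q V}

namespace HyperbolicFrame

variable (F : HyperbolicFrame B) {M : Matrix (Fin 2) (Fin 2) k}

theorem disjoint_graph_zero_iff : Disjoint (F.graph 0) (F.graph M) ↔ M.det ≠ 0 := by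
  rw [disjoint_comm, F.disjoint_graph_iff, sub_zero]

theorem not_disjoint_transversal_graph_zero (t : Option k) :
    ¬Disjoint (F.transversal t) (F.graph 0) :=
  F.not_disjoint_transversal_graph_iff.mpr (by simp)

/-- The ruling containing `y = 0`, `x = 0` and `y = M x`. -/
def pencil (M : Matrix (Fin 2) (Fin 2) k) : Set (Submodule k V) :=
  insert F.infinity ((fun c : k => F.graph (c • M)) '' {c | c ^ q = c})

theorem pencil_subset_isotropicLines (hM : M ∈ skewHermitian k q) :
    F.pencil M ⊆ isotropicLines B := by
  rintro _ (rfl | ⟨c, hc, rfl⟩)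
  · exact F.isIsotropicLine_infinity
  · exact F.isIsotropicLine_graph_iff.mpr fun i j =>
      (mul_pow c _ q).trans (by rw [hc, hM i j, mul_neg]; rfl)

theorem subset_pencil : {F.graph 0, F.infinity, F.graph M} ⊆ F.pencil M := by
  have hq := IsFrobeniusPower.ne_zero k q
  rintro _ (rfl | rfl | rfl)
  · exact .inr ⟨0, by simp [hq], by simp⟩
  · exact .inl rfl
  · exact .inr ⟨1, by simp, by simp⟩

theorem disjoint_graph_smul (hdet : M.det ≠ 0) {c d : k} (hcd : c ≠ d) :
    Disjoint (F.graph (c • M)) (F.graph (d • M)) := by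
  rw [disjoint_graph_iff, ← sub_smul, Matrix.det_smul]
  exact mul_ne_zero (pow_ne_zero _ (sub_ne_zero.mpr hcd)) hdet

theorem pairwise_disjoint_pencil (hdet : M.det ≠ 0) : (F.pencil M).Pairwise Disjoint := by
  rintro _ (rfl | ⟨c, -, rfl⟩) _ (rfl | ⟨d, -, rfl⟩) hne
  · exact (hne rfl).elim
  · exact (F.disjoint_graph_infinity _).symm
  · exact F.disjoint_graph_infinity _
  · exact F.disjoint_graph_smul hdet fun h => hne (by rw [h])

theorem not_disjoint_transversal_of_mem_pencil {t : Option k} (ht : t ∈ isotropicPoints q M)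
    {L : Submodule k V} (hL : L ∈ F.pencil M) : ¬Disjoint (F.transversal t) L := by
  rcases hL with rfl | ⟨c, -, rfl⟩
  · exact F.not_disjoint_transversal_infinity t
  · exact F.not_disjoint_transversal_graph_iff.mpr
      (isotropicPoints_subset_isotropicPoints_smul c M ht)

theorem image_transversal_subset_isotropicLines {s : Set (Option k)} (hs : s ⊆ rationalPoints k q) :
    F.transversal '' s ⊆ isotropicLines B := by
  rintro _ ⟨t, ht, rfl⟩
  exact F.isIsotropicLine_transversal_iff.mpr (hs ht)

theorem ncard_pencil [IsAlgClosed k] (hdet : M.det ≠ 0) : (F.pencil M).ncard = q + 1 := by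
  have hinj : Function.Injective fun c : k => F.graph (c • M) := fun c d h => by
    have hM : M ≠ 0 := by rintro rfl; simp at hdet
    exact smul_left_injective k hM (F.graph_injective h)
  have hfin : {c : k | c ^ q = c}.Finite := Set.finite_of_ncard_ne_zero
    (by simp [ncard_setOf_pow_eq_self, IsFrobeniusPower.ne_zero k q])
  rw [pencil, Set.ncard_insert_of_notMem _ (hfin.image _), Set.ncard_image_of_injective _ hinj,
    ncard_setOf_pow_eq_self]
  rintro ⟨c, -, hc⟩
  exact (F.disjoint_graph_infinity _).symm.ne F.isIsotropicLine_infinity.ne_bot hc.symm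

theorem isGrid_pencil [IsAlgClosed k] (hM : M ∈ skewHermitian k q) (hdet : M.det ≠ 0) :
    IsGrid (q + 1) (F.pencil M) (F.transversal '' isotropicPoints q M) where
  ncard_left := F.ncard_pencil hdet
  ncard_right := by
    rw [Set.ncard_image_of_injective _ F.transversal_injective, ncard_isotropicPoints hM hdet]
  disjoint_left := F.pairwise_disjoint_pencil hdet
  disjoint_right := by
    rintro _ ⟨s, -, rfl⟩ _ ⟨t, -, rfl⟩ hne
    exact F.disjoint_transversal fun h => hne (by rw [h])
  not_disjoint := by
    rintro L hL _ ⟨t, ht, rfl⟩ hdisj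
    exact F.not_disjoint_transversal_of_mem_pencil ht hL hdisj.symm

variable [FiniteDimensional k V]

theorem sep_disjoint_infinity :
    {L ∈ isotropicLines B | Disjoint F.infinity L} = F.graph '' skewHermitian k q := by
  ext L
  constructor
  · rintro ⟨hL, hdisj⟩
    obtain ⟨M, rfl⟩ := F.exists_eq_graph hL.1 hdisj.symm
    exact ⟨M, F.isIsotropicLine_graph_iff.mp hL, rfl⟩
  · rintro ⟨M, hM, rfl⟩
    exact ⟨F.isIsotropicLine_graph_iff.mpr hM, (F.disjoint_graph_infinity M).symm⟩

theorem sep_disjoint_graph_zero_disjoint_infinity :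
    {L ∈ isotropicLines B | Disjoint (F.graph 0) L ∧ Disjoint F.infinity L} =
      F.graph '' {M ∈ skewHermitian k q | M.det ≠ 0} := by
  ext L
  constructor
  · rintro ⟨hL, hzero, hinf⟩
    obtain ⟨M, hM, rfl⟩ := F.sep_disjoint_infinity.subset ⟨hL, hinf⟩
    exact ⟨M, ⟨hM, F.disjoint_graph_zero_iff.mp hzero⟩, rfl⟩
  · rintro ⟨M, ⟨hM, hdet⟩, rfl⟩
    exact ⟨F.isIsotropicLine_graph_iff.mpr hM, F.disjoint_graph_zero_iff.mpr hdet,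
      (F.disjoint_graph_infinity M).symm⟩

theorem sep_not_disjoint_graph_zero_not_disjoint_infinity :
    {L ∈ isotropicLines B | ¬Disjoint (F.graph 0) L ∧ ¬Disjoint F.infinity L} =
      F.transversal '' rationalPoints k q := by
  ext L
  constructor
  · rintro ⟨hL, hzero, hinf⟩
    rw [disjoint_comm] at hzero hinf
    obtain ⟨t, rfl⟩ := F.exists_eq_transversal hL hzero hinf
    exact ⟨t, F.isIsotropicLine_transversal_iff.mp hL, rfl⟩
  · rintro ⟨t, ht, rfl⟩
    rw [Set.mem_ofPred_eq, disjoint_comm, disjoint_comm (a := F.infinity)]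
    exact ⟨F.isIsotropicLine_transversal_iff.mpr ht, F.not_disjoint_transversal_graph_zero t,
      F.not_disjoint_transversal_infinity t⟩

theorem transversals_eq (hM : M ∈ skewHermitian k q) (hdet : M.det ≠ 0) :
    transversals (isotropicLines B) {F.graph 0, F.infinity, F.graph M} =
      F.transversal '' isotropicPoints q M := by
  ext L
  constructor
  · rintro ⟨hL, hmeet⟩
    obtain ⟨t, rfl⟩ := F.exists_eq_transversal hL (hmeet _ (by simp)) (hmeet _ (by simp))
    exact ⟨t, F.not_disjoint_transversal_graph_iff.mp (hmeet _ (by simp)), rfl⟩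
  · rintro ⟨t, ht, rfl⟩
    exact ⟨F.isIsotropicLine_transversal_iff.mpr (isotropicPoints_subset_rationalPoints hM hdet ht),
      fun N hN => F.not_disjoint_transversal_of_mem_pencil ht (F.subset_pencil hN)⟩

end HyperbolicFrame

end LinesInFrame

section LineCounts

variable {k : Type*} [Field k] [IsAlgClosed k] {q : ℕ} [IsFrobeniusPower k q]

theorem HyperbolicFrame.exists_notMem_isotropicPoints (t : Option k) :
    ∃ M ∈ skewHermitian k q, t ∉ isotropicPoints q M := by
  have hq := IsFrobeniusPower.ne_zero k q
  obtain ⟨a, ha, ha0⟩ : ∃ a ∈ {a : k | a ^ q = -a}, a ≠ 0 := Set.exists_ne_of_one_lt_ncard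
    (by rw [ncard_setOf_pow_eq_neg]; exact IsFrobeniusPower.one_lt k q) 0
  cases t with
  | none =>
    refine ⟨!![0, 0; 0, a], mem_skewHermitian_iff.mpr (by simpa [hq] using ha), ?_⟩
    simpa [none_mem_isotropicPoints_iff] using ha0
  | some t =>
    have hM : !![a, 0; 0, 0] ∈ skewHermitian k q :=
      mem_skewHermitian_iff.mpr (by simpa [hq] using ha)
    exact ⟨_, hM, by simpa [some_mem_isotropicPoints_iff hM, hq] using ha0⟩

variable {V : Type*} [AddCommGroup V] [Module k V] [FiniteDimensional k V]
  {B : FrobeniusForm k q V} (hB : B.Nondegenerate) (hV : finrank k V = 4)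

include hB hV

theorem IsIsotropicLine.exists_disjoint {L : Submodule k V} (hL : IsIsotropicLine B L) :
    ∃ L', IsIsotropicLine B L' ∧ Disjoint L L' := by
  obtain ⟨L₀, L₁, hL₀, hL₁, hdisj⟩ := exists_disjoint_isIsotropicLine hB hV
  obtain ⟨F, rfl, rfl⟩ := HyperbolicFrame.exists_graph_zero_eq_infinity_eq hB hV hL₀ hL₁ hdisj
  by_cases hzero : Disjoint L (F.graph 0)
  · exact ⟨_, hL₀, hzero⟩
  by_cases hinf : Disjoint L F.infinity
  · exact ⟨_, hL₁, hinf⟩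
  obtain ⟨t, rfl⟩ := F.exists_eq_transversal hL hzero hinf
  obtain ⟨M, hM, ht⟩ := HyperbolicFrame.exists_notMem_isotropicPoints (q := q) t
  exact ⟨F.graph M, F.isIsotropicLine_graph_iff.mpr hM,
    not_not.mp fun h => ht (F.not_disjoint_transversal_graph_iff.mp h)⟩

theorem ncard_isotropicLines_disjoint {L : Submodule k V} (hL : L ∈ isotropicLines B) :
    {N ∈ isotropicLines B | Disjoint L N}.ncard = q ^ 4 := by
  obtain ⟨L', hL', hdisj⟩ := IsIsotropicLine.exists_disjoint hB hV hL
  obtain ⟨F, -, rfl⟩ :=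
    HyperbolicFrame.exists_graph_zero_eq_infinity_eq hB hV hL' hL hdisj.symm
  rw [F.sep_disjoint_infinity, Set.ncard_image_of_injective _ F.graph_injective,
    HyperbolicFrame.ncard_skewHermitian]

theorem ncard_isotropicLines_disjoint_disjoint {L L' : Submodule k V} (hL : L ∈ isotropicLines B)
    (hL' : L' ∈ isotropicLines B) (hdisj : Disjoint L L') :
    {N ∈ isotropicLines B | Disjoint L N ∧ Disjoint L' N}.ncard = q * (q - 1) * (q ^ 2 + 1) := by
  obtain ⟨F, rfl, rfl⟩ := HyperbolicFrame.exists_graph_zero_eq_infinity_eq hB hV hL hL' hdisj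
  rw [F.sep_disjoint_graph_zero_disjoint_infinity, Set.ncard_image_of_injective _ F.graph_injective,
    HyperbolicFrame.ncard_skewHermitian_det_ne_zero]

theorem ncard_isotropicLines_not_disjoint_not_disjoint {L L' : Submodule k V}
    (hL : L ∈ isotropicLines B) (hL' : L' ∈ isotropicLines B) (hdisj : Disjoint L L') :
    {N ∈ isotropicLines B | ¬Disjoint L N ∧ ¬Disjoint L' N}.ncard = q ^ 2 + 1 := by
  obtain ⟨F, rfl, rfl⟩ := HyperbolicFrame.exists_graph_zero_eq_infinity_eq hB hV hL hL' hdisj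
  rw [F.sep_not_disjoint_graph_zero_not_disjoint_infinity,
    Set.ncard_image_of_injective _ F.transversal_injective, HyperbolicFrame.ncard_rationalPoints]

theorem finite_isotropicLines : (isotropicLines B).Finite := by
  obtain ⟨L, L', hL, hL', hdisj⟩ := exists_disjoint_isIsotropicLine hB hV
  have hfin {N : Submodule k V} (hN : IsIsotropicLine B N) :
      {P ∈ isotropicLines B | Disjoint N P}.Finite := Set.finite_of_ncard_ne_zero <| by
    rw [ncard_isotropicLines_disjoint hB hV hN]
    exact pow_ne_zero _ (IsFrobeniusPower.ne_zero k q)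
  have hfin' : {P ∈ isotropicLines B | ¬Disjoint L P ∧ ¬Disjoint L' P}.Finite :=
    Set.finite_of_ncard_pos (by
      rw [ncard_isotropicLines_not_disjoint_not_disjoint hB hV hL hL' hdisj]; lia)
  refine (((hfin hL).union (hfin hL')).union hfin').subset fun N hN => ?_
  by_cases h : Disjoint L N <;> by_cases h' : Disjoint L' N <;> simp [hN, h, h']

theorem ncard_isotropicLines : (isotropicLines B).ncard = (q ^ 3 + 1) * (q + 1) := by
  obtain ⟨L, L', hL, hL', hdisj⟩ := exists_disjoint_isIsotropicLine hB hV
  have hfin := finite_isotropicLines hB hV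
  have hL_split := ncard_sep_add_ncard_sep_not hfin (Disjoint L)
  have hdisj_split := ncard_sep_add_ncard_sep_not (hfin.sep (Disjoint L')) (Disjoint L)
  have hmeet_split := ncard_sep_add_ncard_sep_not (hfin.sep (¬Disjoint L ·)) (Disjoint L')
  simp only [Set.mem_ofPred_eq, and_assoc] at hdisj_split hmeet_split
  simp only [and_comm (a := Disjoint L' _)] at hdisj_split
  rw [ncard_isotropicLines_disjoint_disjoint hB hV hL hL' hdisj,
    ncard_isotropicLines_disjoint hB hV hL'] at hdisj_split
  rw [ncard_isotropicLines_not_disjoint_not_disjoint hB hV hL hL' hdisj] at hmeet_split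
  rw [ncard_isotropicLines_disjoint hB hV hL] at hL_split
  obtain ⟨r, rfl⟩ := Nat.exists_eq_add_of_lt (IsFrobeniusPower.one_lt k q)
  simp only [Nat.add_sub_cancel] at hdisj_split
  linarith

theorem exists_hyperbolicFrame_of_mem_disjointTriples {L L' N : Submodule k V}
    (hτ : (L, L', N) ∈ disjointTriples (isotropicLines B)) :
    ∃ (F : HyperbolicFrame B) (M : Matrix (Fin 2) (Fin 2) k),
      M ∈ HyperbolicFrame.skewHermitian k q ∧ M.det ≠ 0 ∧
        F.graph 0 = L ∧ F.infinity = L' ∧ F.graph M = N := by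
  obtain ⟨hL, ⟨hL', hdisj⟩, hN⟩ := hτ
  obtain ⟨F, rfl, rfl⟩ := HyperbolicFrame.exists_graph_zero_eq_infinity_eq hB hV hL hL' hdisj
  obtain ⟨M, ⟨hM, hdet⟩, rfl⟩ := F.sep_disjoint_graph_zero_disjoint_infinity.subset hN
  exact ⟨F, M, hM, hdet, rfl, rfl, rfl⟩

theorem ncard_transversals_isotropicLines {L L' N : Submodule k V}
    (hτ : (L, L', N) ∈ disjointTriples (isotropicLines B)) :
    (transversals (isotropicLines B) {L, L', N}).ncard = q + 1 := by
  obtain ⟨F, M, hM, hdet, rfl, rfl, rfl⟩ :=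
    exists_hyperbolicFrame_of_mem_disjointTriples hB hV hτ
  rw [F.transversals_eq hM hdet]
  exact (F.isGrid_pencil hM hdet).ncard_right

theorem exists_isGrid_isotropicLines {L L' N : Submodule k V}
    (hτ : (L, L', N) ∈ disjointTriples (isotropicLines B)) :
    ∃ 𝒜 ℬ, IsGrid (q + 1) 𝒜 ℬ ∧ 𝒜 ∪ ℬ ⊆ isotropicLines B ∧ {L, L', N} ⊆ 𝒜 := by
  obtain ⟨F, M, hM, hdet, rfl, rfl, rfl⟩ :=
    exists_hyperbolicFrame_of_mem_disjointTriples hB hV hτ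
  exact ⟨_, _, F.isGrid_pencil hM hdet, Set.union_subset (F.pencil_subset_isotropicLines hM)
    (F.image_transversal_subset_isotropicLines
      (HyperbolicFrame.isotropicPoints_subset_rationalPoints hM hdet)), F.subset_pencil⟩

theorem two_mul_ncard_gridUnions_isotropicLines :
    2 * (gridUnions (q + 1) (isotropicLines B)).ncard = (q ^ 3 + 1) * (q ^ 2 + 1) * q ^ 4 := by
  have hq := IsFrobeniusPower.one_lt k q
  have hpos : 0 < q * (q - 1) := Nat.mul_pos (by lia) (by lia)
  have hcount := ncard_gridUnions_mul (by lia)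
    (fun _ _ _ => ncard_transversals_isotropicLines hB hV) (finite_isotropicLines hB hV)
    (fun _ _ _ => exists_isGrid_isotropicLines hB hV)
  rw [ncard_disjointTriples (finite_isotropicLines hB hV) (pow_ne_zero 4 (by lia))
    (mul_ne_zero hpos.ne' (Nat.succ_ne_zero _))
    (fun _ => ncard_isotropicLines_disjoint hB hV)
    (fun _ hL _ hL' => ncard_isotropicLines_disjoint_disjoint hB hV hL hL'),
    ncard_isotropicLines hB hV, show q + 1 - 2 = q - 1 by lia, Nat.add_sub_cancel] at hcount
  refine Nat.eq_of_mul_eq_mul_right (Nat.mul_pos q.succ_pos hpos) ?_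
  rw [Nat.succ_eq_add_one]
  linarith

end LineCounts

section MatrixForm

variable {k : Type*} [Field k]

theorem isFrobeniusPower_pow {p e : ℕ} (hp : p.Prime) [CharP k p] (he : e ≠ 0) :
    IsFrobeniusPower k (p ^ e) where
  isPrimePow := hp.isPrimePow.pow he
  cast_eq_zero := by rw [Nat.cast_pow, CharP.cast_eq_zero, zero_pow he]

variable {q : ℕ} [IsFrobeniusPower k q] {n : Type*} [Fintype n] [DecidableEq n]

/-- The Frobenius form `∑ i, ∑ j, A i j * x i ^ q * y j` of a matrix `A`. -/
def matrixForm (q : ℕ) [IsFrobeniusPower k q] (A : Matrix n n k) : FrobeniusForm k q (n → k) :=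
  Matrix.toLinearMapₛₗ₂' k (frob k q) (RingHom.id k) A

theorem matrixForm_apply (A : Matrix n n k) (x y : n → k) :
    matrixForm q A x y = (fun i => x i ^ q) ⬝ᵥ A.mulVec y := by
  simp [matrixForm, Matrix.toLinearMapₛₗ₂'_apply, Matrix.mulVec, dotProduct, Finset.mul_sum,
    mul_comm]

theorem nondegenerate_matrixForm {A : Matrix n n k} (hA : IsUnit A) :
    (matrixForm q A).Nondegenerate := by
  have hdet : A.det ≠ 0 := ((Matrix.isUnit_iff_isUnit_det A).mp hA).ne_zero
  have hq := IsFrobeniusPower.ne_zero k q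
  refine ⟨fun x hx => ?_, fun y hy => Matrix.eq_zero_of_mulVec_eq_zero hdet (funext fun i => ?_)⟩
  · have hfrob := (Matrix.nondegenerate_of_det_ne_zero hdet).eq_zero_of_ortho fun y =>
      (matrixForm_apply A x y).symm.trans (hx y)
    exact funext fun i => (pow_eq_zero_iff hq).mp (congrFun hfrob i)
  · simpa [matrixForm_apply, dotProduct, Pi.single_apply, ite_pow, hq] using hy (Pi.single i 1)

theorem frobForm_eq_matrixForm_self (A : Matrix (Fin 4) (Fin 4) k) (x : Fin 4 → k) :
    frobForm q A x = matrixForm q A x x := by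
  simp only [frobForm, matrixForm_apply, dotProduct, Matrix.mulVec, Finset.mul_sum, mul_assoc,
    mul_left_comm]

variable [IsAlgClosed k] {A : Matrix (Fin 4) (Fin 4) k}

theorem isLineOn_extremalCone_iff {L : Submodule k (Fin 4 → k)} :
    IsLineOn (extremalCone k q A) L ↔ L ∈ isotropicLines (matrixForm q A) := by
  refine Iff.trans ?_ isIsotropicLine_iff.symm
  simp only [← frobForm_eq_matrixForm_self]
  rfl

theorem isQuadricConfig_iff {S : Set (Submodule k (Fin 4 → k))} :
    IsQuadricConfig (q + 1) (extremalCone k q A) S ↔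
      S ∈ gridUnions (q + 1) (isotropicLines (matrixForm q A)) := by
  simp only [IsQuadricConfig, isLineOn_extremalCone_iff, SkewLine, MeetsLine, ne_eq, ← disjoint_iff]
  constructor
  · rintro ⟨-, hS, ℒ, ℳ, rfl, hℒ, hℳ, hskewℒ, hskewℳ, hmeet⟩
    exact ⟨hS, ℒ, ℳ, ⟨hℒ, hℳ, hskewℒ, hskewℳ, hmeet⟩, rfl⟩
  · rintro ⟨hS, ℒ, ℳ, h, rfl⟩
    have hq := IsFrobeniusPower.one_lt k q
    exact ⟨h.ncard_union (by lia), hS, ℒ, ℳ, rfl, h.ncard_left, h.ncard_right, h.disjoint_left,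
      h.disjoint_right, h.not_disjoint⟩

end MatrixForm

end ExtremalSurface

/-- A smooth extremal surface `X` of degree `d = q+1`
contains exactly `½(q³+1)(q²+1)q⁴` quadric configurations: twice the number
of quadric configurations on `X` equals `(q³+1)(q²+1)q⁴`. -/
theorem count_quadric_configs {k : Type*} [Field k] [IsAlgClosed k]
    (p e q : ℕ) (hp : p.Prime) (hchar : CharP k p) (he : 1 ≤ e) (hq : q = p ^ e)
    (A : Matrix (Fin 4) (Fin 4) k) (hA : IsUnit A) :
    2 * {S : Set (Submodule k (Fin 4 → k)) |
        IsQuadricConfig (q + 1) (extremalCone k q A) S}.ncard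
      = (q ^ 3 + 1) * (q ^ 2 + 1) * q ^ 4 := by
  subst hq
  have := ExtremalSurface.isFrobeniusPower_pow (k := k) hp (Nat.one_le_iff_ne_zero.mp he)
  simp only [ExtremalSurface.isQuadricConfig_iff]
  exact ExtremalSurface.two_mul_ncard_gridUnions_isotropicLines
    (ExtremalSurface.nondegenerate_matrixForm hA) (finrank_fin_fun k)
end
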